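/- arXiv:1404.4591 — 7 statements merged into one kernel-verified Lean document; each statement's English description precedes it below -/
import Mathlib

section
/- For every real p ≥ 1: ∫_ℝ Q_p(x)^{p+2} dx = (2(p+2)/(p+4)) · ∫_ℝ Q_p(x)² dx, and ∫_ℝ Q_p'(x)² dx = (p/(p+4)) · ∫_ℝ Q_p(x)² dx. -/
/-!
Write `Q = solitonQ p` and `T x = tanh (p x / 2)`. Everything follows from two pointwise facts:
`Q' = -T Q`, and `Q ^ (p + 2) = (p + 2) / 2 * Q ^ 2 * (1 - T ^ 2)`, the latter because
`Q ^ p = (p + 2) / 2 * cosh (p x / 2) ^ (-2)`. They give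
`(Q ^ 2 * T)' = (p + 4) / (p + 2) * Q ^ (p + 2) - 2 * Q ^ 2` and
`Q' ^ 2 = Q ^ 2 - 2 / (p + 2) * Q ^ (p + 2)`.
Since `Q` is bounded by a multiple of `exp (-|x|)`, the functions `Q ^ 2`, `Q ^ 2 * T` and
`Q ^ (p + 2)` are integrable. The integral of the derivative of the integrable function
`Q ^ 2 * T` vanishes, which is the first identity; integrating the formula for `Q' ^ 2` and
inserting the first identity gives the second.
-/

open Real MeasureTheory

/-- The soliton profile `Q_p(x) = ((p+2)/2)^(1/p) * (cosh (p*x/2))^(-2/p)`. -/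
noncomputable def solitonQ (p : ℝ) (x : ℝ) : ℝ :=
  ((p + 2) / 2) ^ (1 / p) * (Real.cosh (p * x / 2)) ^ (-(2 / p))

lemma solitonQ_pos {p : ℝ} (hp : 1 ≤ p) (x : ℝ) : 0 < solitonQ p x :=
  mul_pos (rpow_pos_of_pos (by linarith) _) (rpow_pos_of_pos (Real.cosh_pos _) _)

lemma one_sub_tanh_sq (y : ℝ) : 1 - tanh y ^ 2 = (cosh y ^ 2)⁻¹ := by
  have h := (Real.cosh_pos y).ne'
  rw [Real.tanh_eq_sinh_div_cosh]
  field_simp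
  linarith [Real.cosh_sq y]

lemma hasDerivAt_tanh_half (p x : ℝ) :
    HasDerivAt (fun x => tanh (p * x / 2)) (p / 2 * (1 - tanh (p * x / 2) ^ 2)) x := by
  have h := (Real.cosh_pos (p * x / 2)).ne'
  have hl : HasDerivAt (fun x : ℝ => p * x / 2) (p / 2) x := by
    simpa using ((hasDerivAt_id x).const_mul p).div_const 2
  have hd := hl.sinh.div hl.cosh h
  have e : (fun x => tanh (p * x / 2)) =
      (fun x => sinh (p * x / 2)) / (fun x => cosh (p * x / 2)) := by
    funext y
    simp [Real.tanh_eq_sinh_div_cosh]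
  rw [e]
  refine hd.congr_deriv ?_
  rw [Real.tanh_eq_sinh_div_cosh]
  field_simp

lemma hasDerivAt_solitonQ {p : ℝ} (hp : 1 ≤ p) (x : ℝ) :
    HasDerivAt (solitonQ p) (-(tanh (p * x / 2) * solitonQ p x)) x := by
  have h := Real.cosh_pos (p * x / 2)
  have hp0 : p ≠ 0 := by linarith
  have hl : HasDerivAt (fun x : ℝ => p * x / 2) (p / 2) x := by
    simpa using ((hasDerivAt_id x).const_mul p).div_const 2
  have hd := (hl.cosh.rpow_const (p := -(2 / p)) (Or.inl h.ne')).const_mul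
    (((p + 2) / 2) ^ (1 / p))
  refine hd.congr_deriv ?_
  rw [Real.rpow_sub_one h.ne', Real.tanh_eq_sinh_div_cosh, solitonQ]
  field_simp

lemma solitonQ_rpow_add_two {p : ℝ} (hp : 1 ≤ p) (x : ℝ) :
    solitonQ p x ^ (p + 2) =
      (p + 2) / 2 * (solitonQ p x ^ 2 * (1 - tanh (p * x / 2) ^ 2)) := by
  have h := Real.cosh_pos (p * x / 2)
  have hp0 : p ≠ 0 := by linarith
  have hQp : solitonQ p x ^ p = (p + 2) / 2 * (cosh (p * x / 2) ^ 2)⁻¹ := by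
    rw [solitonQ, Real.mul_rpow (rpow_nonneg (by linarith) _) (rpow_nonneg h.le _),
      ← Real.rpow_mul (by linarith), ← Real.rpow_mul h.le,
      one_div_mul_cancel hp0, Real.rpow_one, neg_mul, div_mul_cancel₀ _ hp0,
      Real.rpow_neg h.le, Real.rpow_two]
  rw [Real.rpow_add (solitonQ_pos hp x), Real.rpow_two, hQp, one_sub_tanh_sq]
  ring

lemma solitonQ_le_exp {p : ℝ} (hp : 1 ≤ p) (x : ℝ) :
    solitonQ p x ≤ ((p + 2) / 2) ^ (1 / p) * (1 / 2) ^ (-(2 / p)) * exp (-|x|) := by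
  have hp0 : 0 < p := by linarith
  have hc : 1 / 2 * exp |p * x / 2| ≤ cosh (p * x / 2) := by
    rw [Real.cosh_eq]
    linarith [Real.exp_abs_le (p * x / 2)]
  have hr := Real.rpow_le_rpow_of_nonpos (by positivity) hc
    (show -(2 / p) ≤ 0 from neg_nonpos.mpr (by positivity))
  have he : exp |p * x / 2| ^ (-(2 / p)) = exp (-|x|) := by
    rw [← Real.exp_mul, abs_div, abs_mul, abs_of_pos hp0, abs_two]
    congr 1
    field_simp
  rw [Real.mul_rpow (by norm_num) (exp_pos _).le, he] at hr
  rw [solitonQ, mul_assoc]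
  exact mul_le_mul_of_nonneg_left hr (by positivity)

lemma integrable_exp_neg_two_abs : Integrable (fun x : ℝ => exp (-2 * |x|)) := by
  rw [← integrableOn_univ, ← Set.Iic_union_Ioi (a := (0 : ℝ))]
  refine IntegrableOn.union ?_ ?_
  · refine (integrableOn_exp_mul_Iic (a := 2) (by norm_num) 0).congr_fun ?_ measurableSet_Iic
    intro x hx
    simp [abs_of_nonpos (Set.mem_Iic.mp hx)]
  · refine (exp_neg_integrableOn_Ioi 0 (b := 2) (by norm_num)).congr_fun ?_ measurableSet_Ioi
    intro x hx
    simp [abs_of_pos (Set.mem_Ioi.mp hx)]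

lemma continuous_solitonQ {p : ℝ} (hp : 1 ≤ p) : Continuous (solitonQ p) :=
  continuous_iff_continuousAt.mpr fun x => (hasDerivAt_solitonQ hp x).continuousAt

lemma continuous_tanh_half (p : ℝ) : Continuous (fun x => tanh (p * x / 2)) :=
  continuous_iff_continuousAt.mpr fun x => (hasDerivAt_tanh_half p x).continuousAt

lemma integrable_solitonQ_sq {p : ℝ} (hp : 1 ≤ p) :
    Integrable (fun x => solitonQ p x ^ 2) := by
  refine (integrable_exp_neg_two_abs.const_mul
    ((((p + 2) / 2) ^ (1 / p) * (1 / 2) ^ (-(2 / p))) ^ 2)).mono'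
    ((continuous_solitonQ hp).pow 2).aestronglyMeasurable (Filter.Eventually.of_forall fun x => ?_)
  have h := pow_le_pow_left₀ (solitonQ_pos hp x).le (solitonQ_le_exp hp x) 2
  rw [mul_pow _ (exp (-|x|)), ← Real.exp_nat_mul] at h
  rw [Real.norm_of_nonneg (sq_nonneg _)]
  have e : ((2 : ℕ) : ℝ) * -|x| = -2 * |x| := by
    push_cast
    ring
  rwa [e] at h

/-- Multiplying `Q ^ 2` by a continuous function bounded by `1` preserves integrability. -/
lemma integrable_solitonQ_sq_mul {p : ℝ} (hp : 1 ≤ p) {g : ℝ → ℝ} (hg : Continuous g)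
    (hb : ∀ x, |g x| ≤ 1) : Integrable (fun x => solitonQ p x ^ 2 * g x) := by
  refine (integrable_solitonQ_sq hp).mono'
    (((continuous_solitonQ hp).pow 2).mul hg).aestronglyMeasurable
    (Filter.Eventually.of_forall fun x => ?_)
  rw [norm_mul, Real.norm_of_nonneg (sq_nonneg _), Real.norm_eq_abs]
  exact mul_le_of_le_one_right (sq_nonneg _) (hb x)

theorem soliton_norm_identities (p : ℝ) (hp : 1 ≤ p) :
    (∫ x : ℝ, (solitonQ p x) ^ (p + 2))
      = (2 * (p + 2) / (p + 4)) * ∫ x : ℝ, (solitonQ p x) ^ 2 ∧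
    (∫ x : ℝ, (deriv (solitonQ p) x) ^ 2)
      = (p / (p + 4)) * ∫ x : ℝ, (solitonQ p x) ^ 2 := by
  have h2 : p + 2 ≠ 0 := by linarith
  have h4 : p + 4 ≠ 0 := by linarith
  have hI := integrable_solitonQ_sq hp
  have hT : Integrable (fun x => solitonQ p x ^ 2 * tanh (p * x / 2)) :=
    integrable_solitonQ_sq_mul hp (continuous_tanh_half p)
      fun x => (Real.abs_tanh_lt_one _).le
  have hJ : Integrable (fun x => solitonQ p x ^ (p + 2)) := by
    simp_rw [solitonQ_rpow_add_two hp]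
    refine (integrable_solitonQ_sq_mul hp (g := fun x => 1 - tanh (p * x / 2) ^ 2)
      (continuous_const.sub ((continuous_tanh_half p).pow 2)) fun x => ?_).const_mul _
    have := Real.tanh_sq_lt_one (p * x / 2)
    rw [abs_le]
    constructor <;> nlinarith [sq_nonneg (tanh (p * x / 2))]
  have hd : ∀ x, HasDerivAt (fun x => solitonQ p x ^ 2 * tanh (p * x / 2))
      ((p + 4) / (p + 2) * solitonQ p x ^ (p + 2) - 2 * solitonQ p x ^ 2) x := by
    intro x
    refine (((hasDerivAt_solitonQ hp x).pow 2).mul (hasDerivAt_tanh_half p x)).congr_deriv ?_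
    rw [solitonQ_rpow_add_two hp]
    simp only [Pi.pow_apply]
    field_simp
    ring
  have h0 := integral_eq_zero_of_hasDerivAt_of_integrable hd
    ((hJ.const_mul _).sub (hI.const_mul _)) hT
  rw [integral_sub (hJ.const_mul _) (hI.const_mul _), integral_const_mul,
    integral_const_mul] at h0
  have h1 : (∫ x : ℝ, (solitonQ p x) ^ (p + 2))
      = (2 * (p + 2) / (p + 4)) * ∫ x : ℝ, (solitonQ p x) ^ 2 := by
    field_simp at h0 ⊢
    linarith
  refine ⟨h1, ?_⟩
  have hQ' : ∀ x, deriv (solitonQ p) x ^ 2 =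
      solitonQ p x ^ 2 - 2 / (p + 2) * solitonQ p x ^ (p + 2) := by
    intro x
    rw [(hasDerivAt_solitonQ hp x).deriv, solitonQ_rpow_add_two hp]
    field_simp
    ring
  simp_rw [hQ']
  rw [integral_sub hI (hJ.const_mul _), integral_const_mul, h1]
  field_simp
  ring
end

section
/- For the L²-critical exponent p = 4 (so that Q_4(x) = 3^{1/4}·(cosh(2x))^{−1/2}), the following hold: ∫_ℝ Q_4(x) dx = 3072^{1/4} · Γ(5/4)² / √π, ∫_ℝ Q_4(x)² dx = (√3/2)·π, and consequently (∫_ℝ Q_4 dx)² / (∫_ℝ Q_4² dx) = Γ(1/4)^4 / (4π²). -/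
/-!
Everything reduces to the formula
`∫ cosh(2x)^(-2a) dx = 4^(a-1) * Γ(a)^2 / Γ(2a)` for `a > 0` (`integral_cosh_rpow`), used at
`a = 1/4` for `Q_4` and at `a = 1/2` for `Q_4 ^ 2`. To obtain it, substitute the logistic function
`t = σ(4x) = 1 / (1 + e^(-4x))` in the Beta integral `∫₀¹ (t (1 - t))^(a-1) dt = Γ(a)^2 / Γ(2a)`:
this maps `ℝ` bijectively onto `(0, 1)`, with `dt = 4 t (1 - t) dx` and
`t (1 - t) = 1 / (4 cosh(2x)^2)`. The closed forms then follow from `Γ(1/2) = √π`, `Γ(1) = 1` and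
`Γ(5/4) = Γ(1/4) / 4`.
-/

open Real MeasureTheory

/-- The symmetric Beta integral, as an integral of a real function. -/
lemma integral_Ioo_symm_beta {a : ℝ} (ha : 0 < a) :
    ∫ t in Set.Ioo (0 : ℝ) 1, t ^ (a - 1) * (1 - t) ^ (a - 1)
      = Real.Gamma a ^ 2 / Real.Gamma (2 * a) := by
  have hB := Complex.betaIntegral_eq_Gamma_mul_div (a : ℂ) (a : ℂ) (by simpa) (by simpa)
  rw [Complex.betaIntegral, intervalIntegral.integral_of_le zero_le_one,
    integral_Ioc_eq_integral_Ioo] at hB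
  have hcast : ∫ t in Set.Ioo (0 : ℝ) 1, (t : ℂ) ^ ((a : ℂ) - 1) * (1 - (t : ℂ)) ^ ((a : ℂ) - 1)
      = ((∫ t in Set.Ioo (0 : ℝ) 1, t ^ (a - 1) * (1 - t) ^ (a - 1) : ℝ) : ℂ) := by
    rw [← integral_complex_ofReal]
    refine setIntegral_congr_fun measurableSet_Ioo fun t ht => ?_
    have h1 : (0 : ℝ) ≤ 1 - t := by linarith [ht.2]
    simp only [Complex.ofReal_mul, Complex.ofReal_cpow ht.1.le, Complex.ofReal_cpow h1,
      Complex.ofReal_sub, Complex.ofReal_one]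
  rw [hcast, ← Complex.ofReal_add, Complex.Gamma_ofReal, Complex.Gamma_ofReal] at hB
  rw [two_mul, sq]
  exact_mod_cast hB

lemma sigmoid_mul_one_sub (x : ℝ) :
    sigmoid (4 * x) * (1 - sigmoid (4 * x)) = (4 * cosh (2 * x) ^ 2)⁻¹ := by
  rw [← sigmoid_neg, sigmoid_def, sigmoid_def, ← mul_inv, neg_neg, cosh_eq]
  have h1 : exp (4 * x) = exp (2 * x) ^ 2 := by rw [← exp_nat_mul]; ring_nf
  rw [exp_neg, exp_neg, h1]
  have := exp_pos (2 * x)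
  congr 1
  field_simp
  ring

lemma integral_cosh_rpow {a : ℝ} (ha : 0 < a) :
    ∫ x : ℝ, cosh (2 * x) ^ (-(2 * a))
      = 4 ^ (a - 1) * (Real.Gamma a ^ 2 / Real.Gamma (2 * a)) := by
  have himg : (fun x : ℝ => sigmoid (4 * x)) '' Set.univ = Set.Ioo 0 1 := by
    rw [Set.image_univ, ← range_sigmoid]
    exact (mul_left_surjective₀ (four_ne_zero : (4 : ℝ) ≠ 0)).range_comp sigmoid
  have hder : ∀ x ∈ (Set.univ : Set ℝ), HasDerivWithinAt (fun x : ℝ => sigmoid (4 * x))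
      (sigmoid (4 * x) * (1 - sigmoid (4 * x)) * 4) Set.univ x := fun x _ => by
    have h4 : HasDerivAt (fun y : ℝ => 4 * y) 4 x := by
      simpa using (hasDerivAt_id x).const_mul (4 : ℝ)
    exact ((hasDerivAt_sigmoid (4 * x)).comp x h4).hasDerivWithinAt
  have hinj : Set.InjOn (fun x : ℝ => sigmoid (4 * x)) Set.univ := fun x _ y _ h => by
    have := sigmoid_injective h
    linarith
  have hcv := integral_image_eq_integral_abs_deriv_smul MeasurableSet.univ hder hinj
    (fun t => t ^ (a - 1) * (1 - t) ^ (a - 1))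
  rw [himg, integral_Ioo_symm_beta ha, setIntegral_univ] at hcv
  rw [hcv, ← integral_const_mul]
  refine integral_congr_ae (Filter.Eventually.of_forall fun x => ?_)
  have hs := sigmoid_pos (4 * x)
  have hs' : 0 < 1 - sigmoid (4 * x) := sub_pos.2 (sigmoid_lt_one _)
  have hc := cosh_pos (2 * x)
  simp only [smul_eq_mul]
  rw [← mul_rpow hs.le hs'.le, abs_of_pos (by positivity), sigmoid_mul_one_sub,
    inv_rpow (by positivity), mul_rpow (by norm_num) (by positivity), ← rpow_natCast,
    ← rpow_mul hc.le, rpow_neg hc.le]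
  have h2 : cosh (2 * x) ^ (2 * a)
      = cosh (2 * x) ^ (((2 : ℕ) : ℝ) * (a - 1)) * cosh (2 * x) ^ ((2 : ℕ) : ℝ) := by
    rw [← rpow_add hc]; congr 1; push_cast; ring
  rw [h2]
  have := rpow_pos_of_pos (by norm_num : (0 : ℝ) < 4) (a - 1)
  have := rpow_pos_of_pos hc (((2 : ℕ) : ℝ) * (a - 1))
  have := rpow_pos_of_pos hc ((2 : ℕ) : ℝ)
  field_simp

lemma solitonQ_four (x : ℝ) :
    solitonQ 4 x = 3 ^ ((1 : ℝ) / 4) * cosh (2 * x) ^ (-(2 * (1 / 4 : ℝ))) := by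
  unfold solitonQ
  congr 2 <;> ring_nf

lemma solitonQ_four_sq (x : ℝ) :
    solitonQ 4 x ^ 2 = √3 * cosh (2 * x) ^ (-(2 * (1 / 2 : ℝ))) := by
  rw [solitonQ_four, mul_pow, sqrt_eq_rpow, ← rpow_mul_natCast (by norm_num),
    ← rpow_mul_natCast (cosh_pos _).le]
  norm_num

theorem critical_soliton_integrals :
    (∫ x : ℝ, solitonQ 4 x)
        = (3072 : ℝ) ^ ((1 : ℝ) / 4) * Real.Gamma (5 / 4) ^ 2 / Real.sqrt π ∧
    (∫ x : ℝ, (solitonQ 4 x) ^ 2) = (Real.sqrt 3 / 2) * π ∧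
    (∫ x : ℝ, solitonQ 4 x) ^ 2 / (∫ x : ℝ, (solitonQ 4 x) ^ 2)
        = Real.Gamma (1 / 4) ^ 4 / (4 * π ^ 2) := by
  have hG : Real.Gamma (5 / 4) = 1 / 4 * Real.Gamma (1 / 4) := by
    rw [← Real.Gamma_add_one (by norm_num)]; norm_num
  -- `3072 = 3 * 4 ^ 5`
  have h3072 : (3072 : ℝ) ^ ((1 : ℝ) / 4) = 3 ^ ((1 : ℝ) / 4) * (16 * 4 ^ ((1 : ℝ) / 4 - 1)) := by
    rw [show (3072 : ℝ) = 3 * 4 ^ (5 : ℝ) by norm_num, mul_rpow (by norm_num) (by positivity),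
      ← rpow_mul (by norm_num), show (16 : ℝ) = 4 ^ (2 : ℝ) by norm_num,
      ← rpow_add (by norm_num)]
    norm_num
  have h1 : (∫ x : ℝ, solitonQ 4 x)
      = (3072 : ℝ) ^ ((1 : ℝ) / 4) * Real.Gamma (5 / 4) ^ 2 / √π := by
    simp_rw [solitonQ_four]
    rw [integral_const_mul, integral_cosh_rpow (by norm_num), h3072, hG,
      show (2 * (1 / 4) : ℝ) = 1 / 2 by norm_num, Real.Gamma_one_half_eq]
    ring
  have h2 : (∫ x : ℝ, (solitonQ 4 x) ^ 2) = (√3 / 2) * π := by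
    simp_rw [solitonQ_four_sq]
    rw [integral_const_mul, integral_cosh_rpow (by norm_num), Real.Gamma_one_half_eq,
      sq_sqrt pi_pos.le, show (2 * (1 / 2) : ℝ) = 1 by norm_num, Real.Gamma_one,
      show (4 : ℝ) ^ ((1 : ℝ) / 2 - 1) = 1 / 2 by
        rw [show (4 : ℝ) = 2 ^ (2 : ℝ) by norm_num, ← rpow_mul (by norm_num)]
        norm_num [rpow_neg_one]]
    ring
  refine ⟨h1, h2, ?_⟩
  have hsq : ((3072 : ℝ) ^ ((1 : ℝ) / 4)) ^ 2 = 32 * √3 := by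
    rw [← rpow_mul_natCast (by norm_num), show (3072 : ℝ) = 32 ^ (2 : ℝ) * 3 by norm_num,
      mul_rpow (by positivity) (by norm_num), ← rpow_mul (by norm_num), sqrt_eq_rpow]
    norm_num
  have := pi_pos
  have h3 : 0 < √3 := by positivity
  rw [h1, h2, div_pow, mul_pow, hsq, sq_sqrt pi_pos.le, hG]
  field_simp
  norm_num
end

section
/- For every real γ > −1, the function Hi_γ is differentiable on ℝ and its derivative is Hi_γ'(x) = Hi_{γ+1}(x) for all x ∈ ℝ; consequently Hi_γ is infinitely differentiable, with k-th derivative Hi_{γ+k}. -/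
/-!
Differentiation under the integral sign. For `x ≤ M - 1` with `M ≥ 1` and `σ > 0`, the inequality
`(σ - M)² (σ + 2M) ≥ 0` gives `-σ³/3 + σx ≤ 2M³/3 - σ`, so near any point every integrand
`σ^γ exp(-σ³/3 + σx)` is dominated by the constant multiple `exp(2M³/3) · σ^γ exp(-σ)` of a Gamma
integrand, which is integrable for `γ > -1`. Applying this with exponent `γ + 1` to the
`x`-derivative of the integrand yields `Hi_γ' = Hi_{γ+1}`; the higher derivatives and smoothness
follow by induction on the order.
-/

open Real MeasureTheory

/-- The generalized Scorer function `Hi_γ(x) = (1/π) ∫_0^∞ σ^γ exp(-σ³/3 + σx) dσ`. -/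
noncomputable def scorerHi (γ : ℝ) (x : ℝ) : ℝ :=
  (1 / π) * ∫ σ in Set.Ioi (0 : ℝ), σ ^ γ * Real.exp (-σ ^ 3 / 3 + σ * x)

lemma scorer_exponent_le {M x σ : ℝ} (hM : 1 ≤ M) (hx : x ≤ M - 1) (hσ : 0 < σ) :
    -σ ^ 3 / 3 + σ * x ≤ 2 * M ^ 3 / 3 - σ := by
  have h1 : 0 ≤ (σ - M) ^ 2 * (σ + 2 * M) := by positivity
  have h2 : σ * x ≤ σ * (M - 1) := mul_le_mul_of_nonneg_left hx hσ.le
  have h3 : 0 ≤ σ * (M * (M - 1)) :=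
    mul_nonneg hσ.le (mul_nonneg (by linarith) (by linarith))
  nlinarith

lemma scorer_integrand_norm_le {γ M x σ : ℝ} (hM : 1 ≤ M) (hx : x ≤ M - 1) (hσ : 0 < σ) :
    ‖σ ^ γ * Real.exp (-σ ^ 3 / 3 + σ * x)‖ ≤
      Real.exp (2 * M ^ 3 / 3) * (Real.exp (-σ) * σ ^ γ) := by
  rw [Real.norm_of_nonneg (by positivity), ← mul_assoc, ← Real.exp_add, mul_comm]
  refine mul_le_mul_of_nonneg_right (Real.exp_le_exp.mpr ?_) (by positivity)
  linarith [scorer_exponent_le hM hx hσ]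

lemma scorer_bound_integrable {γ : ℝ} (hγ : -1 < γ) (C : ℝ) :
    IntegrableOn (fun σ : ℝ => C * (Real.exp (-σ) * σ ^ γ)) (Set.Ioi 0) := by
  have h := Real.GammaIntegral_convergent (s := γ + 1) (by linarith)
  simp only [add_sub_cancel_right] at h
  exact h.const_mul C

lemma scorer_integrand_meas (γ x : ℝ) :
    AEStronglyMeasurable (fun σ : ℝ => σ ^ γ * Real.exp (-σ ^ 3 / 3 + σ * x))
      (volume.restrict (Set.Ioi 0)) := by
  apply Measurable.aestronglyMeasurable
  fun_prop

lemma scorer_integrand_integrable {γ : ℝ} (hγ : -1 < γ) (x : ℝ) :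
    IntegrableOn (fun σ : ℝ => σ ^ γ * Real.exp (-σ ^ 3 / 3 + σ * x)) (Set.Ioi 0) := by
  refine (scorer_bound_integrable hγ (Real.exp (2 * (|x| + 1) ^ 3 / 3))).mono'
    (scorer_integrand_meas γ x) ?_
  filter_upwards [ae_restrict_mem measurableSet_Ioi] with σ hσ
  exact scorer_integrand_norm_le (by linarith [abs_nonneg x]) (by linarith [le_abs_self x]) hσ

lemma scorerHi_hasDerivAt {γ : ℝ} (hγ : -1 < γ) (x : ℝ) :
    HasDerivAt (scorerHi γ) (scorerHi (γ + 1) x) x := by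
  have key := hasDerivAt_integral_of_dominated_loc_of_deriv_le
    (μ := volume.restrict (Set.Ioi (0 : ℝ)))
    (F := fun x σ : ℝ => σ ^ γ * Real.exp (-σ ^ 3 / 3 + σ * x))
    (F' := fun x σ : ℝ => σ ^ (γ + 1) * Real.exp (-σ ^ 3 / 3 + σ * x))
    (bound := fun σ : ℝ => Real.exp (2 * (|x| + 2) ^ 3 / 3) * (Real.exp (-σ) * σ ^ (γ + 1)))
    (Metric.ball_mem_nhds x one_pos)
    (Filter.Eventually.of_forall fun y => scorer_integrand_meas γ y)
    (scorer_integrand_integrable hγ x) (scorer_integrand_meas (γ + 1) x) ?_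
    (scorer_bound_integrable (by linarith) _) ?_
  · exact key.2.const_mul (1 / π)
  · filter_upwards [ae_restrict_mem measurableSet_Ioi] with σ hσ y hy
    rw [Metric.mem_ball, Real.dist_eq, abs_lt] at hy
    exact scorer_integrand_norm_le (by linarith [abs_nonneg x])
      (by linarith [le_abs_self x, hy.2]) hσ
  · filter_upwards [ae_restrict_mem measurableSet_Ioi] with σ hσ y _
    have h : HasDerivAt (fun y : ℝ => -σ ^ 3 / 3 + σ * y) (σ * 1) y :=
      ((hasDerivAt_id y).const_mul σ).const_add _
    convert! h.exp.const_mul (σ ^ γ) using 1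
    rw [Real.rpow_add_one (ne_of_gt hσ)]
    ring

lemma scorerHi_iteratedDeriv {γ : ℝ} (hγ : -1 < γ) (k : ℕ) :
    iteratedDeriv k (scorerHi γ) = scorerHi (γ + k) := by
  induction k with
  | zero => simp
  | succ k ih =>
    have hk : -1 < γ + k := by linarith [(Nat.cast_nonneg k : (0 : ℝ) ≤ k)]
    rw [iteratedDeriv_succ, ih]
    funext x
    rw [(scorerHi_hasDerivAt hk x).deriv]
    push_cast
    rw [add_assoc]

theorem scorerHi_deriv (γ : ℝ) (hγ : -1 < γ) :
    (∀ x : ℝ, HasDerivAt (scorerHi γ) (scorerHi (γ + 1) x) x) ∧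
    ContDiff ℝ (⊤ : ℕ∞) (scorerHi γ) ∧
    ∀ (k : ℕ) (x : ℝ), iteratedDeriv k (scorerHi γ) x = scorerHi (γ + k) x := by
  refine ⟨scorerHi_hasDerivAt hγ, ?_, fun k x => congrFun (scorerHi_iteratedDeriv hγ k) x⟩
  refine contDiff_of_differentiable_iteratedDeriv fun k _ => ?_
  rw [scorerHi_iteratedDeriv hγ k]
  have hk : -1 < γ + k := by linarith [(Nat.cast_nonneg k : (0 : ℝ) ≤ k)]
  exact fun x => (scorerHi_hasDerivAt hk x).differentiableAt
end

section
/- For every real γ > −1: lim_{x→+∞} x^{1/4 − γ/2} · exp(−(2/3)·x^{3/2}) · Hi_γ(x) = 1/√π. -/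
open Real MeasureTheory Filter

/-!
The proof is Laplace's method. Substituting `σ = √x · s` and writing `m = x^(3/4)`, the exponent
becomes `(2/3) m² - m² (s - 1)² (s + 2) / 3`, so the quantity in the theorem equals
`(1/π) · m ∫_0^∞ s^γ exp(-m² (s - 1)² (s + 2) / 3) ds` (`scorerHi_rescaled`), and it remains to show
that `m ∫_0^∞ …` tends to `√π` as `m → ∞`.

The integral is split at `s = 1/2`. On `(0, 1/2]` the phase is at least `1/6`, so this part is at
most `m exp(-m²/6) ∫_0^{1/2} s^γ ds`, which tends to `0` (`tendsto_near_zero`); here `γ > -1` is used.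
On `(1/2, ∞)` the substitution `s = 1 + u/m` gives an integrand that converges pointwise to
`exp(-u²)` and is dominated by a multiple of `exp(-u²/3)` uniformly in `m ≥ 1`
(`laplaceIntegrand_le`), so dominated convergence yields the Gaussian integral
`∫ exp(-u²) du = √π` (`tendsto_near_one`).
-/

/-- The rescaled integrand `s^γ exp(-m² (s - 1)² (s + 2) / 3)`; its phase `2/3 - s + s³/3`, in
factored form, has its minimum over `s ≥ 0` at `s = 1`. -/
noncomputable def laplaceIntegrand (γ m s : ℝ) : ℝ :=
  s ^ γ * exp (-(m ^ 2 * ((s - 1) ^ 2 * (s + 2) / 3)))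

lemma laplaceIntegrand_nonneg {γ m s : ℝ} (hs : 0 < s) : 0 ≤ laplaceIntegrand γ m s := by
  unfold laplaceIntegrand
  positivity

lemma measurable_laplaceIntegrand (γ m : ℝ) : Measurable (laplaceIntegrand γ m) := by
  unfold laplaceIntegrand
  fun_prop

/-- A bound on the power `s^γ` away from `0`, uniform in the sign of `γ`. -/
lemma rpow_le_exp_of_half_lt {γ s : ℝ} (hs : 1 / 2 < s) :
    s ^ γ ≤ exp (|γ| * (1 + |s - 1|)) := by
  have hs0 : 0 < s := by linarith
  rw [rpow_def_of_pos hs0, exp_le_exp]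
  have hlog : |log s| ≤ 1 + |s - 1| := by
    rw [abs_le]
    constructor
    · have h1 := one_sub_inv_le_log_of_pos hs0
      have h2 : s⁻¹ ≤ 2 := by
        rw [inv_le_comm₀ hs0 (by norm_num)]
        linarith
      linarith [abs_nonneg (s - 1)]
    · linarith [log_le_sub_one_of_pos hs0, le_abs_self (s - 1)]
  calc log s * γ ≤ |log s * γ| := le_abs_self _
    _ = |γ| * |log s| := by rw [abs_mul, mul_comm]
    _ ≤ |γ| * (1 + |s - 1|) := by gcongr

/-- The dominating function to the right of `1/2`: half of the quadratic decay
`exp(-(2/3) (m (s - 1))²)` of the exponential absorbs the growth of `s^γ`. -/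
lemma laplaceIntegrand_le {γ m s : ℝ} (hm : 1 ≤ m) (hs : 1 / 2 < s) :
    laplaceIntegrand γ m s
      ≤ exp (|γ| + 3 / 4 * γ ^ 2) * exp (-(1 / 3) * (m * (s - 1)) ^ 2) := by
  unfold laplaceIntegrand
  have h1 := rpow_le_exp_of_half_lt (γ := γ) hs
  calc s ^ γ * exp (-(m ^ 2 * ((s - 1) ^ 2 * (s + 2) / 3)))
      ≤ exp (|γ| * (1 + |s - 1|)) * exp (-(m ^ 2 * ((s - 1) ^ 2 * (s + 2) / 3))) := by gcongr
    _ ≤ _ := by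
      rw [← exp_add, ← exp_add, exp_le_exp]
      have h2 : |s - 1| ≤ |m * (s - 1)| := by
        rw [abs_mul, abs_of_nonneg (by linarith : (0 : ℝ) ≤ m)]
        nlinarith [abs_nonneg (s - 1)]
      have h3 : |γ| * |s - 1| ≤ |γ| * |m * (s - 1)| := by gcongr
      have h4 : 0 ≤ (m * (s - 1)) ^ 2 * s := by positivity
      nlinarith [sq_abs γ, sq_abs (m * (s - 1)), sq_nonneg (3 / 2 * |γ| - |m * (s - 1)|)]

lemma integrableOn_laplaceIntegrand_right {γ m : ℝ} (hm : 1 ≤ m) :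
    IntegrableOn (laplaceIntegrand γ m) (Set.Ioi (1 / 2)) := by
  have h0 : Integrable (fun s : ℝ =>
      exp (|γ| + 3 / 4 * γ ^ 2) * exp (-(1 / 3) * (m * (s - 1)) ^ 2)) := by
    have h1 := (integrable_exp_neg_mul_sq (b := m ^ 2 / 3) (by positivity)).comp_sub_right 1
    refine (h1.const_mul (exp (|γ| + 3 / 4 * γ ^ 2))).congr (Eventually.of_forall fun s => ?_)
    simp only
    congr 2
    ring
  refine h0.integrableOn.mono' (measurable_laplaceIntegrand γ m).aestronglyMeasurable ?_
  refine (ae_restrict_mem measurableSet_Ioi).mono fun s hs => ?_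
  have hs' : 1 / 2 < s := hs
  rw [norm_of_nonneg (laplaceIntegrand_nonneg (by linarith))]
  exact laplaceIntegrand_le hm hs

lemma integrableOn_rpow_Ioc_half {γ : ℝ} (hγ : -1 < γ) :
    IntegrableOn (fun s : ℝ => s ^ γ) (Set.Ioc 0 (1 / 2)) := by
  rw [← intervalIntegrable_iff_integrableOn_Ioc_of_le (by norm_num)]
  exact intervalIntegral.intervalIntegrable_rpow' hγ

lemma laplaceIntegrand_le_of_le_half {γ m s : ℝ} (hs : s ∈ Set.Ioc (0 : ℝ) (1 / 2)) :
    laplaceIntegrand γ m s ≤ exp (-(m ^ 2 / 6)) * s ^ γ := by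
  obtain ⟨h0, h1⟩ := hs
  unfold laplaceIntegrand
  rw [mul_comm]
  gcongr
  have h2 : (1 : ℝ) / 6 ≤ (s - 1) ^ 2 * (s + 2) / 3 := by
    have : (1 : ℝ) / 4 ≤ (s - 1) ^ 2 := by nlinarith
    nlinarith
  nlinarith [sq_nonneg m]

lemma integrableOn_laplaceIntegrand_left {γ : ℝ} (hγ : -1 < γ) (m : ℝ) :
    IntegrableOn (laplaceIntegrand γ m) (Set.Ioc 0 (1 / 2)) := by
  refine ((integrableOn_rpow_Ioc_half hγ).const_mul (exp (-(m ^ 2 / 6)))).mono'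
    (measurable_laplaceIntegrand γ m).aestronglyMeasurable ?_
  refine (ae_restrict_mem measurableSet_Ioc).mono fun s hs => ?_
  rw [norm_of_nonneg (laplaceIntegrand_nonneg hs.1)]
  exact laplaceIntegrand_le_of_le_half hs

/-- The contribution of `(0, 1/2]` is exponentially small. -/
lemma tendsto_near_zero {γ : ℝ} (hγ : -1 < γ) :
    Tendsto (fun m : ℝ => m * ∫ s in Set.Ioc (0 : ℝ) (1 / 2), laplaceIntegrand γ m s)
      atTop (nhds 0) := by
  set C := ∫ s in Set.Ioc (0 : ℝ) (1 / 2), s ^ γ with hC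
  have hlim : Tendsto (fun m : ℝ => m * exp (-(m ^ 2 / 6)) * C) atTop (nhds 0) := by
    have h1 : Tendsto (fun m : ℝ => m * exp (-(m ^ 2 / 6))) atTop (nhds 0) := by
      have h2 : Tendsto (fun m : ℝ => m * exp (-(1 / 6) * m)) atTop (nhds 0) := by
        have := tendsto_rpow_mul_exp_neg_mul_atTop_nhds_zero 1 (1 / 6) (by norm_num)
        simpa using this
      refine squeeze_zero' ?_ ?_ h2
      · filter_upwards [eventually_ge_atTop 0] with m hm
        positivity
      · filter_upwards [eventually_ge_atTop 1] with m hm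
        gcongr
        nlinarith
    simpa using h1.mul_const C
  refine squeeze_zero' ?_ ?_ hlim
  · filter_upwards [eventually_ge_atTop 0] with m hm
    exact mul_nonneg hm (setIntegral_nonneg measurableSet_Ioc
      fun s hs => laplaceIntegrand_nonneg hs.1)
  · filter_upwards [eventually_ge_atTop 0] with m hm
    rw [mul_assoc, hC]
    refine mul_le_mul_of_nonneg_left ?_ hm
    rw [← integral_const_mul]
    exact setIntegral_mono_on (integrableOn_laplaceIntegrand_left hγ m)
      ((integrableOn_rpow_Ioc_half hγ).const_mul _) measurableSet_Ioc
      fun s hs => laplaceIntegrand_le_of_le_half hs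

/-- The contribution of `(1/2, ∞)` tends to the full Gaussian integral. -/
lemma tendsto_near_one (γ : ℝ) :
    Tendsto (fun m : ℝ => m * ∫ s in Set.Ioi (1 / 2 : ℝ), laplaceIntegrand γ m s)
      atTop (nhds (√π)) := by
  have hgauss : ∫ u : ℝ, exp (-1 * u ^ 2) = √π := by
    rw [integral_gaussian, div_one]
  rw [← hgauss]
  have hsub : (fun m : ℝ => ∫ u : ℝ,
        (Set.Ioi (1 / 2 : ℝ)).indicator (laplaceIntegrand γ m) (1 + u / m)) =ᶠ[atTop]
      fun m : ℝ => m * ∫ s in Set.Ioi (1 / 2 : ℝ), laplaceIntegrand γ m s := by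
    filter_upwards [eventually_gt_atTop 0] with m hm
    rw [Measure.integral_comp_div
      (fun v : ℝ => (Set.Ioi (1 / 2 : ℝ)).indicator (laplaceIntegrand γ m) (1 + v)) m,
      integral_add_left_eq_self
        (fun v : ℝ => (Set.Ioi (1 / 2 : ℝ)).indicator (laplaceIntegrand γ m) v) 1,
      integral_indicator measurableSet_Ioi, abs_of_pos hm, smul_eq_mul]
  refine Tendsto.congr' hsub ?_
  refine tendsto_integral_filter_of_dominated_convergence
    (fun u => exp (|γ| + 3 / 4 * γ ^ 2) * exp (-(1 / 3) * u ^ 2)) ?_ ?_ ?_ ?_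
  · refine Eventually.of_forall fun m => Measurable.aestronglyMeasurable ?_
    exact ((measurable_laplaceIntegrand γ m).indicator measurableSet_Ioi).comp (by fun_prop)
  · filter_upwards [eventually_ge_atTop 1] with m hm
    refine Eventually.of_forall fun u => ?_
    by_cases hs : 1 + u / m ∈ Set.Ioi (1 / 2 : ℝ)
    · have hs' : 1 / 2 < 1 + u / m := hs
      rw [Set.indicator_of_mem hs, norm_of_nonneg (laplaceIntegrand_nonneg (by linarith))]
      have h := laplaceIntegrand_le (γ := γ) hm hs'
      have hu : m * (1 + u / m - 1) = u := by
        field_simp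
        ring
      rwa [hu] at h
    · rw [Set.indicator_of_notMem hs, norm_zero]
      positivity
  · exact (integrable_exp_neg_mul_sq (by norm_num)).const_mul _
  · refine Eventually.of_forall fun u => ?_
    have hs : Tendsto (fun m : ℝ => 1 + u / m) atTop (nhds 1) := by
      simpa using (tendsto_const_nhds (x := (1 : ℝ))).add
        ((tendsto_const_nhds (x := u)).div_atTop tendsto_id)
    have hpow : Tendsto (fun m : ℝ => (1 + u / m) ^ γ) atTop (nhds 1) := by
      simpa using hs.rpow_const (p := γ) (Or.inl one_ne_zero)
    have hexp : Tendsto (fun m : ℝ => exp (-(u ^ 2 * ((1 + u / m + 2) / 3)))) atTop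
        (nhds (exp (-1 * u ^ 2))) := by
      refine (continuous_exp.tendsto _).comp ?_
      have := (((hs.add_const 2).div_const 3).const_mul (u ^ 2)).neg
      convert this using 2
      norm_num
    have hmul := hpow.mul hexp
    rw [one_mul] at hmul
    refine hmul.congr' ?_
    filter_upwards [hs.eventually (lt_mem_nhds (by norm_num : (1 / 2 : ℝ) < 1)),
      eventually_gt_atTop 0] with m h1 h2
    rw [Set.indicator_of_mem (show 1 + u / m ∈ Set.Ioi (1 / 2 : ℝ) from h1), laplaceIntegrand]
    congr 3
    field_simp
    ring

lemma tendsto_laplace {γ : ℝ} (hγ : -1 < γ) :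
    Tendsto (fun m : ℝ => m * ∫ s in Set.Ioi (0 : ℝ), laplaceIntegrand γ m s)
      atTop (nhds (√π)) := by
  have h := (tendsto_near_zero hγ).add (tendsto_near_one γ)
  rw [zero_add] at h
  refine h.congr' ?_
  filter_upwards [eventually_ge_atTop 1] with m hm
  rw [← mul_add, ← Set.Ioc_union_Ioi_eq_Ioi (by norm_num : (0 : ℝ) ≤ 1 / 2),
    setIntegral_union (Set.Ioc_disjoint_Ioi le_rfl) measurableSet_Ioi
      (integrableOn_laplaceIntegrand_left hγ m) (integrableOn_laplaceIntegrand_right hm)]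

/-- The substitution `σ = √x · s`, with large parameter `m = x^(3/4)`. -/
lemma scorerHi_rescaled (γ : ℝ) {x : ℝ} (hx : 0 < x) :
    x ^ (1 / 4 - γ / 2) * exp (-(2 / 3) * x ^ ((3 : ℝ) / 2)) * scorerHi γ x
      = 1 / π * (x ^ ((3 : ℝ) / 4)
        * ∫ s in Set.Ioi (0 : ℝ), laplaceIntegrand γ (x ^ ((3 : ℝ) / 4)) s) := by
  set b := x ^ ((1 : ℝ) / 2) with hb
  have hb0 : 0 < b := rpow_pos_of_pos hx _
  have hb2 : x = b ^ 2 := by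
    rw [hb, ← rpow_natCast, ← rpow_mul hx.le]
    norm_num
  have hb3 : x ^ ((3 : ℝ) / 2) = b ^ 3 := by
    rw [hb, ← rpow_natCast, ← rpow_mul hx.le]
    norm_num
  have hm2 : (x ^ ((3 : ℝ) / 4)) ^ 2 = b ^ 3 := by
    rw [← hb3, ← rpow_natCast, ← rpow_mul hx.le]
    norm_num
  have hpow : x ^ (1 / 4 - γ / 2) * (b * b ^ γ) = x ^ ((3 : ℝ) / 4) := by
    rw [hb, ← rpow_mul hx.le, ← rpow_add hx, ← rpow_add hx]
    congr 1
    ring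
  have hint : ∫ σ in Set.Ioi (0 : ℝ), σ ^ γ * exp (-σ ^ 3 / 3 + σ * x)
      = b * b ^ γ * exp (2 / 3 * b ^ 3)
        * ∫ s in Set.Ioi (0 : ℝ), laplaceIntegrand γ (x ^ ((3 : ℝ) / 4)) s := by
    have h := integral_comp_mul_left_Ioi
      (fun σ : ℝ => σ ^ γ * exp (-σ ^ 3 / 3 + σ * x)) 0 hb0
    rw [mul_zero, smul_eq_mul] at h
    have h' : ∫ s in Set.Ioi (0 : ℝ), (b * s) ^ γ * exp (-(b * s) ^ 3 / 3 + b * s * x)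
        = b ^ γ * exp (2 / 3 * b ^ 3)
          * ∫ s in Set.Ioi (0 : ℝ), laplaceIntegrand γ (x ^ ((3 : ℝ) / 4)) s := by
      rw [← integral_const_mul]
      refine setIntegral_congr_fun measurableSet_Ioi fun s hs => ?_
      have hs0 : 0 < s := hs
      simp only [laplaceIntegrand]
      rw [hm2, mul_rpow hb0.le hs0.le]
      have he : exp (-(b * s) ^ 3 / 3 + b * s * x)
          = exp (2 / 3 * b ^ 3) * exp (-(b ^ 3 * ((s - 1) ^ 2 * (s + 2) / 3))) := by
        rw [← exp_add, hb2]
        congr 1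
        ring
      rw [he]
      ring
    rw [h'] at h
    rw [eq_inv_mul_iff_mul_eq₀ hb0.ne'] at h
    rw [← h]
    ring
  have hE : exp (-(2 / 3) * b ^ 3) * exp (2 / 3 * b ^ 3) = 1 := by
    rw [← exp_add, neg_mul, neg_add_cancel, exp_zero]
  rw [scorerHi, hint, hb3]
  set I := ∫ s in Set.Ioi (0 : ℝ), laplaceIntegrand γ (x ^ ((3 : ℝ) / 4)) s
  linear_combination (1 / π * (x ^ (1 / 4 - γ / 2) * (b * b ^ γ)) * I) * hE + (1 / π * I) * hpow

theorem scorerHi_asymptotics_at_plus_infinity (γ : ℝ) (hγ : -1 < γ) :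
    Tendsto
      (fun x : ℝ => x ^ (1 / 4 - γ / 2) * Real.exp (-(2 / 3) * x ^ ((3 : ℝ) / 2))
        * scorerHi γ x)
      atTop (nhds (1 / Real.sqrt π)) := by
  have h := ((tendsto_laplace hγ).comp
    (tendsto_rpow_atTop (by norm_num : (0 : ℝ) < 3 / 4))).const_mul (1 / π)
  have hc : 1 / π * √π = 1 / √π := by
    have h1 : √π * √π = π := mul_self_sqrt pi_pos.le
    have h2 : √π ≠ 0 := (sqrt_pos.mpr pi_pos).ne'
    rw [div_mul_eq_mul_div, one_mul, div_eq_div_iff pi_pos.ne' h2, h1, one_mul]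
  rw [hc] at h
  refine h.congr' ?_
  filter_upwards [eventually_gt_atTop 0] with x hx
  exact (scorerHi_rescaled γ hx).symm
end

section
/- For every real γ with −1 < γ < 2, the improper integral lim_{R→∞} ∫_0^R σ^γ · cos(σ³/3 − γπ/2) dσ exists and equals −sin(π(γ−2)/3) · 3^{(γ−2)/3} · Γ((γ+1)/3). Equivalently, the generalized Airy function value Ai_γ(0) = (1/π)·lim_{R→∞} ∫_0^R σ^γ · cos(σ³/3 − γπ/2) dσ equals −(1/π)·sin(π(γ−2)/3) · 3^{(γ−2)/3} · Γ((γ+1)/3). -/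
/-!
The substitution `t = σ³ / 3` turns the integral into
`3 ^ ((γ - 2) / 3) * ∫ t ^ (s - 1) * cos (t - γπ/2)` with `s = (γ + 1) / 3 ∈ (0, 1)`, so everything
rests on the conditionally convergent integral `∫₀^∞ t ^ (s - 1) e^{it} dt = Γ(s) e^{iπs/2}`
(`tendsto_integral_rpow_mul_exp_I`).

It is obtained from the Laplace transform of `t ^ (s - 1)` at the boundary point `z = -i` of the
half-plane `Re z > 0`. To have absolute convergence up to the boundary, consider
`J(z) = ∫₀^∞ t ^ (s - 2) (1 - e^{-zt}) dt` (`regLaplace`), which is continuous on `Re z ≥ 0` by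
dominated convergence. Integration by parts shows, for every nonzero `z` with `Re z ≥ 0`, that
`∫₀^R t ^ (s - 1) e^{-zt} dt` converges to `(1 - s) / z * J(z)`
(`tendsto_integral_rpow_mul_exp`).

For `Re z > 0`, differentiating under the integral sign gives
`J'(z) = ∫₀^∞ t ^ (s - 1) e^{-zt} dt = (1 - s) / z * J(z)`, so `z ^ (s - 1) J(z)` has zero
derivative and equals its value at `z = 1`, which is `Γ(s) / (1 - s)`. By continuity this persists
at `z = -i`.
-/

open Real MeasureTheory Filter intervalIntegral

/-! ### The regularised Laplace transform -/

/-- The function `t ^ (s - 2) (1 - e^{-zt})`, which for `0 < s < 1` is integrable on `(0, ∞)`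
whenever `Re z ≥ 0`, including purely imaginary `z`. -/
noncomputable def regKernel (s : ℝ) (z : ℂ) (t : ℝ) : ℂ :=
  ((t ^ (s - 2) : ℝ) : ℂ) * (1 - Complex.exp (-z * t))

/-- The regularised Laplace transform `J(z) = ∫₀^∞ t ^ (s - 2) (1 - e^{-zt}) dt`; up to the factor
`(1 - s) / z` it is the Laplace transform of `t ^ (s - 1)`. -/
noncomputable def regLaplace (s : ℝ) (z : ℂ) : ℂ :=
  ∫ t in Set.Ioi (0 : ℝ), regKernel s z t

theorem norm_one_sub_exp_neg_le_two {w : ℂ} (hw : 0 ≤ w.re) :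
    ‖1 - Complex.exp (-w)‖ ≤ 2 := by
  calc ‖1 - Complex.exp (-w)‖ ≤ ‖(1 : ℂ)‖ + ‖Complex.exp (-w)‖ := norm_sub_le _ _
    _ ≤ 1 + 1 := by
      gcongr
      · simp
      · rw [Complex.norm_exp]; simpa using hw
    _ = 2 := by norm_num

theorem norm_one_sub_exp_neg_le {w : ℂ} (hw : 0 ≤ w.re) :
    ‖1 - Complex.exp (-w)‖ ≤ 2 * ‖w‖ := by
  rcases le_total ‖w‖ 1 with h | h
  · rw [norm_sub_rev]
    simpa using Complex.norm_exp_sub_one_le (x := -w) (by simpa using h)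
  · linarith [norm_one_sub_exp_neg_le_two hw]

/-- The bound that dominates `regKernel` on `(0, ∞)`, locally uniformly in `z`: the first entry of
the minimum is integrable near `0`, the second near `∞`. -/
theorem norm_regKernel_le (s : ℝ) {z : ℂ} (hz : 0 ≤ z.re) {t : ℝ} (ht : 0 < t) :
    ‖regKernel s z t‖ ≤ 2 * (1 + ‖z‖) * min (t ^ (s - 1)) (t ^ (s - 2)) := by
  have hp : 0 < t ^ (s - 2) := rpow_pos_of_pos ht _
  have hre : 0 ≤ (z * t).re := by simpa using mul_nonneg hz ht.le
  have h1 : t ^ (s - 1) = t ^ (s - 2) * t := by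
    rw [← rpow_add_one ht.ne']; ring_nf
  have e : ‖regKernel s z t‖ = t ^ (s - 2) * ‖1 - Complex.exp (-(z * t))‖ := by
    simp [regKernel, abs_of_pos hp]
  have hA := norm_one_sub_exp_neg_le_two hre
  have hB := norm_one_sub_exp_neg_le hre
  rw [norm_mul, Complex.norm_real, norm_eq_abs, abs_of_pos ht] at hB
  have hz0 := norm_nonneg z
  rw [e, mul_min_of_nonneg _ _ (by positivity), h1]
  refine le_min ?_ ?_
  · calc _ ≤ t ^ (s - 2) * (2 * (‖z‖ * t)) := by gcongr
      _ ≤ _ := by nlinarith [mul_pos hp ht]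
  · calc _ ≤ t ^ (s - 2) * 2 := by gcongr
      _ ≤ _ := by nlinarith

theorem integrableOn_min_rpow {s : ℝ} (hs0 : 0 < s) (hs1 : s < 1) :
    IntegrableOn (fun t : ℝ => min (t ^ (s - 1)) (t ^ (s - 2))) (Set.Ioi 0) := by
  have hm : Measurable (fun t : ℝ => min (t ^ (s - 1)) (t ^ (s - 2))) := by fun_prop
  rw [← Set.Ioc_union_Ioi_eq_Ioi (zero_le_one (α := ℝ))]
  refine IntegrableOn.union ?_ ?_
  · have h := (intervalIntegrable_iff_integrableOn_Ioc_of_le zero_le_one).1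
      (intervalIntegrable_rpow' (a := 0) (b := 1) (show -1 < s - 1 by linarith))
    refine Integrable.mono' h hm.aestronglyMeasurable ?_
    filter_upwards [ae_restrict_mem measurableSet_Ioc] with t ht
    have := rpow_nonneg ht.1.le (s - 1)
    have := rpow_nonneg ht.1.le (s - 2)
    rw [norm_eq_abs, abs_of_nonneg (by positivity)]
    exact min_le_left _ _
  · have h := integrableOn_Ioi_rpow_of_lt (show s - 2 < -1 by linarith) zero_lt_one
    refine Integrable.mono' h hm.aestronglyMeasurable ?_
    filter_upwards [ae_restrict_mem measurableSet_Ioi] with t ht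
    have ht' : 0 < t := lt_trans zero_lt_one ht
    have := rpow_nonneg ht'.le (s - 1)
    have := rpow_nonneg ht'.le (s - 2)
    rw [norm_eq_abs, abs_of_nonneg (by positivity)]
    exact min_le_right _ _

theorem measurable_regKernel (s : ℝ) (z : ℂ) : Measurable (regKernel s z) := by
  unfold regKernel; fun_prop

theorem integrableOn_regKernel {s : ℝ} (hs0 : 0 < s) (hs1 : s < 1) {z : ℂ} (hz : 0 ≤ z.re) :
    IntegrableOn (regKernel s z) (Set.Ioi 0) := by
  refine Integrable.mono' ((integrableOn_min_rpow hs0 hs1).const_mul (2 * (1 + ‖z‖)))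
    (measurable_regKernel s z).aestronglyMeasurable ?_
  filter_upwards [ae_restrict_mem measurableSet_Ioi] with t ht
  exact norm_regKernel_le s hz ht

theorem continuousWithinAt_regLaplace {s : ℝ} (hs0 : 0 < s) (hs1 : s < 1) (z : ℂ) :
    ContinuousWithinAt (regLaplace s) {w : ℂ | 0 ≤ w.re} z := by
  refine continuousWithinAt_of_dominated
    (bound := fun t => 2 * (1 + (‖z‖ + 1)) * min (t ^ (s - 1)) (t ^ (s - 2)))
    (Eventually.of_forall fun w => (measurable_regKernel s w).aestronglyMeasurable) ?_
    ((integrableOn_min_rpow hs0 hs1).const_mul _) ?_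
  · have hb : ∀ᶠ w in nhdsWithin z {w : ℂ | 0 ≤ w.re}, ‖w‖ < ‖z‖ + 1 :=
      nhdsWithin_le_nhds (continuous_norm.continuousAt.eventually_lt_const (by linarith))
    filter_upwards [hb, self_mem_nhdsWithin] with w hw hre
    filter_upwards [ae_restrict_mem measurableSet_Ioi] with t ht
    refine (norm_regKernel_le s hre ht).trans ?_
    have ht' : (0 : ℝ) ≤ t := le_of_lt ht
    gcongr
  · refine Eventually.of_forall fun t => Continuous.continuousWithinAt ?_
    unfold regKernel
    fun_prop

/-! ### Integration by parts -/

theorem intervalIntegrable_rpow_mul_exp {s : ℝ} (hs0 : 0 < s) (z : ℂ) (a b : ℝ) :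
    IntervalIntegrable (fun t : ℝ => ((t ^ (s - 1) : ℝ) : ℂ) * Complex.exp (-z * t))
      volume a b := by
  refine IntervalIntegrable.mul_continuousOn ?_ (by fun_prop)
  have h : IntervalIntegrable (fun t : ℝ => t ^ (s - 1)) volume a b :=
    intervalIntegrable_rpow' (by linarith)
  exact ⟨h.1.ofReal, h.2.ofReal⟩

/-- Integration by parts in which the antiderivative `(1 - e^{-zt}) / z` of `e^{-zt}` is chosen to
vanish at `0`, so that the boundary term at the singularity `t = 0` disappears. -/
theorem integral_rpow_mul_exp {s : ℝ} (hs0 : 0 < s) (hs1 : s < 1) {z : ℂ} (hz : 0 ≤ z.re)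
    (hz0 : z ≠ 0) {R : ℝ} (hR : 0 < R) :
    ∫ t in (0 : ℝ)..R, ((t ^ (s - 1) : ℝ) : ℂ) * Complex.exp (-z * t) =
      ((R ^ (s - 1) : ℝ) : ℂ) * (1 - Complex.exp (-z * R)) / z +
        (1 - s) / z * ∫ t in (0 : ℝ)..R, regKernel s z t := by
  have hk : IntervalIntegrable (regKernel s z) volume 0 R :=
    (intervalIntegrable_iff_integrableOn_Ioc_of_le hR.le).2
      ((integrableOn_regKernel hs0 hs1 hz).mono_set Set.Ioc_subset_Ioi_self)
  have he := intervalIntegrable_rpow_mul_exp hs0 z 0 R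
  set P : ℝ → ℂ := fun t => ((t ^ (s - 1) : ℝ) : ℂ) * (1 - Complex.exp (-z * t)) / z with hP
  have hder : ∀ t : ℝ, 0 < t → HasDerivAt P
      (((t ^ (s - 1) : ℝ) : ℂ) * Complex.exp (-z * t) - (1 - s) / z * regKernel s z t) t := by
    intro t ht
    have h1 : HasDerivAt (fun t : ℝ => ((t ^ (s - 1) : ℝ) : ℂ))
        (((s - 1) * t ^ (s - 1 - 1) : ℝ) : ℂ) t :=
      (Real.hasDerivAt_rpow_const (Or.inl ht.ne')).ofReal_comp
    have h2 : HasDerivAt (fun t : ℝ => (1 - Complex.exp (-z * t)))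
        (-(Complex.exp (-z * t) * (-z * 1))) t :=
      (((hasDerivAt_id t).ofReal_comp.const_mul (-z)).cexp).const_sub 1
    refine ((h1.mul h2).div_const z).congr_deriv ?_
    rw [show s - 1 - 1 = s - 2 by ring, regKernel]
    field_simp
    push_cast
    ring
  -- Only the endpoint `0` needs an argument: there `P` is dominated by `2 * t ^ s`.
  have hcont : ContinuousOn P (Set.Icc 0 R) := by
    intro t ht
    rcases ht.1.eq_or_lt with h0 | h0
    · subst h0
      have hP0 : P 0 = 0 := by simp [hP]
      rw [ContinuousWithinAt, hP0]
      refine squeeze_zero_norm' (a := fun t : ℝ => 2 * t ^ s) ?_ ?_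
      · filter_upwards [self_mem_nhdsWithin] with t ht
        rcases ht.1.eq_or_lt with h | h
        · subst h; rw [hP0, zero_rpow hs0.ne']; simp
        · have hre : 0 ≤ (z * t).re := by simpa using mul_nonneg hz h.le
          have hB := norm_one_sub_exp_neg_le hre
          rw [norm_mul, Complex.norm_real, norm_eq_abs, abs_of_pos h] at hB
          have hp : 0 < t ^ (s - 1) := rpow_pos_of_pos h _
          have hz' : 0 < ‖z‖ := norm_pos_iff.2 hz0
          have e : ‖P t‖ = t ^ (s - 1) * ‖1 - Complex.exp (-(z * t))‖ / ‖z‖ := by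
            simp [hP, abs_of_pos hp]
          rw [e, div_le_iff₀ hz', show t ^ s = t ^ (s - 1) * t by
            rw [← rpow_add_one h.ne']; ring_nf]
          calc _ ≤ t ^ (s - 1) * (2 * (‖z‖ * t)) := by gcongr
            _ = _ := by ring
      · have : ContinuousAt (fun t : ℝ => 2 * t ^ s) 0 :=
          (continuousAt_rpow_const 0 s (Or.inr hs0.le)).const_mul 2
        have h := this.tendsto.mono_left (nhdsWithin_le_nhds (s := Set.Icc 0 R))
        simpa [zero_rpow hs0.ne'] using h
    · exact (hder t h0).continuousAt.continuousWithinAt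
  have hF := integral_eq_sub_of_hasDerivAt_of_le hR.le hcont (fun t ht => hder t ht.1)
    (he.sub (hk.const_mul ((1 - s) / z)))
  rw [intervalIntegral.integral_sub he (hk.const_mul _), intervalIntegral.integral_const_mul] at hF
  have hP0 : P 0 = 0 := by simp [hP]
  rw [hP0, sub_zero] at hF
  linear_combination hF

theorem tendsto_integral_rpow_mul_exp {s : ℝ} (hs0 : 0 < s) (hs1 : s < 1) {z : ℂ}
    (hz : 0 ≤ z.re) (hz0 : z ≠ 0) :
    Tendsto (fun R : ℝ => ∫ t in (0 : ℝ)..R, ((t ^ (s - 1) : ℝ) : ℂ) * Complex.exp (-z * t))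
      atTop (nhds ((1 - s) / z * regLaplace s z)) := by
  have h1 : Tendsto (fun R : ℝ => ((R ^ (s - 1) : ℝ) : ℂ) * (1 - Complex.exp (-z * R)) / z)
      atTop (nhds 0) := by
    have hz' : 0 < ‖z‖ := norm_pos_iff.2 hz0
    refine squeeze_zero_norm' (a := fun R : ℝ => R ^ (-(1 - s)) * (2 / ‖z‖)) ?_ ?_
    · filter_upwards [eventually_gt_atTop 0] with R hR
      have hre : 0 ≤ (z * R).re := by simpa using mul_nonneg hz hR.le
      have hp : 0 < R ^ (s - 1) := rpow_pos_of_pos hR _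
      have hA := norm_one_sub_exp_neg_le_two hre
      rw [show -(1 - s) = s - 1 by ring, norm_div, norm_mul, Complex.norm_real, norm_eq_abs,
        abs_of_pos hp, mul_div_assoc, neg_mul]
      gcongr
    · simpa using (tendsto_rpow_neg_atTop (show 0 < 1 - s by linarith)).mul_const (2 / ‖z‖)
  have h2 := (intervalIntegral_tendsto_integral_Ioi 0 (integrableOn_regKernel hs0 hs1 hz)
    tendsto_id).const_mul ((1 - s) / z : ℂ)
  have h3 := h1.add h2
  rw [zero_add] at h3
  refine h3.congr' ?_
  filter_upwards [eventually_gt_atTop 0] with R hR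
  exact (integral_rpow_mul_exp hs0 hs1 hz hz0 hR).symm

/-! ### Evaluation on the half-plane and at its boundary -/

theorem integrableOn_rpow_mul_exp_real {s : ℝ} (hs0 : 0 < s) {d : ℝ} (hd : 0 < d) :
    IntegrableOn (fun t : ℝ => t ^ (s - 1) * Real.exp (-d * t)) (Set.Ioi 0) := by
  simpa using integrableOn_rpow_mul_exp_neg_mul_rpow (s := s - 1) (p := 1) (by linarith)
    zero_lt_one hd

theorem norm_rpow_mul_exp_le (s : ℝ) {z : ℂ} {d : ℝ} (hd : d ≤ z.re) {t : ℝ} (ht : 0 < t) :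
    ‖((t ^ (s - 1) : ℝ) : ℂ) * Complex.exp (-z * t)‖ ≤ t ^ (s - 1) * Real.exp (-d * t) := by
  have hp : 0 < t ^ (s - 1) := rpow_pos_of_pos ht _
  rw [norm_mul, Complex.norm_real, norm_eq_abs, abs_of_pos hp, Complex.norm_exp]
  gcongr
  simp
  gcongr

theorem integral_Ioi_rpow_mul_exp {s : ℝ} (hs0 : 0 < s) (hs1 : s < 1) {z : ℂ} (hz : 0 < z.re) :
    ∫ t in Set.Ioi (0 : ℝ), ((t ^ (s - 1) : ℝ) : ℂ) * Complex.exp (-z * t) =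
      (1 - s) / z * regLaplace s z := by
  have hz0 : z ≠ 0 := by rintro rfl; simp at hz
  refine tendsto_nhds_unique (intervalIntegral_tendsto_integral_Ioi 0 ?_ tendsto_id)
    (tendsto_integral_rpow_mul_exp hs0 hs1 hz.le hz0)
  refine Integrable.mono' (integrableOn_rpow_mul_exp_real hs0 hz)
    (Measurable.aestronglyMeasurable (by fun_prop)) ?_
  filter_upwards [ae_restrict_mem measurableSet_Ioi] with t ht
  exact norm_rpow_mul_exp_le s le_rfl ht

/-- The differential equation `J'(z) = (1 - s) / z * J(z)`: the derivative under the integral sign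
is the Laplace transform of `t ^ (s - 1)`, which integration by parts expresses through `J`. -/
theorem hasDerivAt_regLaplace {s : ℝ} (hs0 : 0 < s) (hs1 : s < 1) {z : ℂ} (hz : 0 < z.re) :
    HasDerivAt (regLaplace s) ((1 - s) / z * regLaplace s z) z := by
  rw [← integral_Ioi_rpow_mul_exp hs0 hs1 hz]
  have hU : {w : ℂ | z.re / 2 < w.re} ∈ nhds z :=
    (isOpen_lt continuous_const Complex.continuous_re).mem_nhds (by simpa using hz)
  refine (hasDerivAt_integral_of_dominated_loc_of_deriv_le
    (bound := fun t => t ^ (s - 1) * Real.exp (-(z.re / 2) * t))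
    (F' := fun (w : ℂ) (t : ℝ) => ((t ^ (s - 1) : ℝ) : ℂ) * Complex.exp (-w * t)) hU
    (Eventually.of_forall fun w => (measurable_regKernel s w).aestronglyMeasurable)
    (integrableOn_regKernel hs0 hs1 hz.le)
    (Measurable.aestronglyMeasurable (by fun_prop)) ?_
    (integrableOn_rpow_mul_exp_real hs0 (by linarith)) ?_).2
  · filter_upwards [ae_restrict_mem measurableSet_Ioi] with t ht w hw
    exact norm_rpow_mul_exp_le s (le_of_lt hw) ht
  · filter_upwards [ae_restrict_mem measurableSet_Ioi] with t ht w hw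
    have ht0 : (0 : ℝ) < t := ht
    have h := ((((hasDerivAt_id w).neg.mul_const (t : ℂ)).cexp).const_sub 1).const_mul
      ((t ^ (s - 2) : ℝ) : ℂ)
    refine h.congr_deriv ?_
    rw [show t ^ (s - 1) = t ^ (s - 2) * t by rw [← rpow_add_one ht0.ne']; ring_nf]
    push_cast
    simp
    ring

theorem regLaplace_one {s : ℝ} (hs0 : 0 < s) (hs1 : s < 1) :
    (1 - s) * regLaplace s 1 = (Real.Gamma s : ℂ) := by
  have h := integral_Ioi_rpow_mul_exp hs0 hs1 (z := 1) (by simp)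
  rw [div_one] at h
  rw [← h, Real.Gamma_eq_integral hs0, ← integral_complex_ofReal]
  refine setIntegral_congr_fun measurableSet_Ioi fun t _ => ?_
  push_cast
  simp [mul_comm]

/-- `z ^ (s - 1) J(z)` is constant on `Re z > 0` because its derivative vanishes. -/
theorem cpow_mul_regLaplace {s : ℝ} (hs0 : 0 < s) (hs1 : s < 1) {z : ℂ} (hz : 0 < z.re) :
    (1 - s) * (z ^ ((s : ℂ) - 1) * regLaplace s z) = (Real.Gamma s : ℂ) := by
  have hd : ∀ w : ℂ, 0 < w.re →
      HasDerivAt (fun w => w ^ ((s : ℂ) - 1) * regLaplace s w) 0 w := by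
    intro w hw
    have hw0 : w ≠ 0 := by rintro rfl; simp at hw
    have h1 := (hasDerivAt_id w).cpow_const (c := (s : ℂ) - 1) (Or.inl hw)
    refine (h1.mul (hasDerivAt_regLaplace hs0 hs1 hw)).congr_deriv ?_
    simp only [id, mul_one]
    rw [Complex.cpow_sub _ 1 hw0, Complex.cpow_one]
    field_simp
    ring
  have hconst : z ^ ((s : ℂ) - 1) * regLaplace s z = 1 ^ ((s : ℂ) - 1) * regLaplace s 1 :=
    IsOpen.is_const_of_deriv_eq_zero (isOpen_lt continuous_const Complex.continuous_re)
      (convex_halfSpace_re_gt 0).isPreconnected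
      (fun w hw => (hd w hw).differentiableAt.differentiableWithinAt)
      (fun w hw => (hd w hw).deriv) hz (show (0 : ℝ) < (1 : ℂ).re by simp)
  rw [hconst, Complex.one_cpow, one_mul, regLaplace_one hs0 hs1]

/-- The evaluation extends to the boundary point `-i` by letting `ε - i → -i` as `ε → 0⁺`. -/
theorem cpow_mul_regLaplace_neg_I {s : ℝ} (hs0 : 0 < s) (hs1 : s < 1) :
    (1 - s) * ((-Complex.I) ^ ((s : ℂ) - 1) * regLaplace s (-Complex.I)) =
      (Real.Gamma s : ℂ) := by
  have hpath : Tendsto (fun e : ℝ => (e : ℂ) - Complex.I) (nhdsWithin 0 (Set.Ioi 0))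
      (nhdsWithin (-Complex.I) {w : ℂ | 0 ≤ w.re}) := by
    refine tendsto_nhdsWithin_iff.2 ⟨?_, ?_⟩
    · have : Continuous fun e : ℝ => (e : ℂ) - Complex.I := by fun_prop
      have h := this.tendsto 0
      simp only [Complex.ofReal_zero, zero_sub] at h
      exact h.mono_left nhdsWithin_le_nhds
    · filter_upwards [self_mem_nhdsWithin] with e he
      have : (0 : ℝ) < e := he
      simpa using this.le
  have hc : ContinuousAt (fun w : ℂ => w ^ ((s : ℂ) - 1)) (-Complex.I) :=
    continuousAt_id.cpow continuousAt_const (by simp [Complex.slitPlane])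
  have h := ((hc.continuousWithinAt.mul (continuousWithinAt_regLaplace hs0 hs1 _)).tendsto.comp
    hpath).const_mul (1 - s : ℂ)
  refine tendsto_nhds_unique h (tendsto_const_nhds.congr' ?_)
  filter_upwards [self_mem_nhdsWithin] with e he
  have he' : (0 : ℝ) < e := he
  exact (cpow_mul_regLaplace hs0 hs1 (by simpa using he')).symm

/-! ### The oscillatory integrals -/

theorem tendsto_integral_rpow_mul_exp_I {s : ℝ} (hs0 : 0 < s) (hs1 : s < 1) :
    Tendsto (fun R : ℝ => ∫ t in (0 : ℝ)..R, ((t ^ (s - 1) : ℝ) : ℂ) * Complex.exp (t * Complex.I))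
      atTop (nhds (Real.Gamma s * Complex.exp ((π * s / 2 : ℝ) * Complex.I))) := by
  have h := tendsto_integral_rpow_mul_exp hs0 hs1 (z := -Complex.I) (by simp) (by simp)
  have hI : (-Complex.I) ≠ 0 := by simp
  have e : (1 - s) / (-Complex.I) * regLaplace s (-Complex.I) =
      Real.Gamma s * Complex.exp ((π * s / 2 : ℝ) * Complex.I) := by
    rw [← cpow_mul_regLaplace_neg_I hs0 hs1, Complex.cpow_sub _ 1 hI, Complex.cpow_one]
    have hexp : (-Complex.I) ^ (s : ℂ) * Complex.exp ((π * s / 2 : ℝ) * Complex.I) = 1 := by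
      rw [Complex.cpow_def_of_ne_zero hI, Complex.log_neg_I, ← Complex.exp_add]
      push_cast
      ring_nf
      simp
    linear_combination (-(1 - s) / (-Complex.I) * regLaplace s (-Complex.I)) * hexp
  rw [e] at h
  refine h.congr fun R => ?_
  congr 1
  ext t
  ring_nf

theorem tendsto_integral_rpow_mul_cos {s : ℝ} (hs0 : 0 < s) (hs1 : s < 1) (a : ℝ) :
    Tendsto (fun R : ℝ => ∫ t in (0 : ℝ)..R, t ^ (s - 1) * Real.cos (t - a))
      atTop (nhds (Real.Gamma s * Real.cos (π * s / 2 - a))) := by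
  have h := (Complex.continuous_re.tendsto _).comp
    ((tendsto_integral_rpow_mul_exp_I hs0 hs1).const_mul (Complex.exp (-a * Complex.I)))
  have key : ∀ r x : ℝ, (Complex.exp (-a * Complex.I) * (r * Complex.exp (x * Complex.I))).re =
      r * Real.cos (x - a) := by
    intro r x
    have : Complex.exp (-a * Complex.I) * (r * Complex.exp (x * Complex.I)) =
        r * Complex.exp ((x - a : ℝ) * Complex.I) := by
      rw [mul_left_comm, ← Complex.exp_add]
      push_cast
      ring_nf
    rw [this, Complex.re_ofReal_mul, Complex.exp_ofReal_mul_I_re]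
  rw [key] at h
  refine h.congr fun R => ?_
  have hi := intervalIntegrable_rpow_mul_exp hs0 (-Complex.I) 0 R
  have hi' : IntervalIntegrable
      (fun t : ℝ => ((t ^ (s - 1) : ℝ) : ℂ) * Complex.exp (t * Complex.I)) volume 0 R := by
    convert hi using 3
    ring_nf
  simp only [Function.comp]
  rw [← intervalIntegral.integral_const_mul]
  have := Complex.reCLM.intervalIntegral_comp_comm (hi'.const_mul (Complex.exp (-a * Complex.I)))
  simp only [Complex.reCLM_apply] at this
  rw [← this]
  simp only [key]

/-- The change of variables `t = σ³ / 3`. -/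
theorem integral_cubic_substitution {γ : ℝ} (hγ : -1 < γ) (a : ℝ) {R : ℝ} (hR : 0 < R) :
    ∫ σ in (0 : ℝ)..R, σ ^ γ * Real.cos (σ ^ 3 / 3 - a) =
      3 ^ ((γ - 2) / 3) *
        ∫ t in (0 : ℝ)..R ^ 3 / 3, t ^ ((γ + 1) / 3 - 1) * Real.cos (t - a) := by
  set g : ℝ → ℝ := fun t => t ^ ((γ + 1) / 3 - 1) * Real.cos (t - a) with hg
  have hpt : ∀ σ : ℝ, 0 < σ → σ ^ γ * Real.cos (σ ^ 3 / 3 - a) =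
      3 ^ ((γ - 2) / 3) * ((g ∘ fun x : ℝ => x ^ 3 / 3) σ * σ ^ 2) := by
    intro σ hσ
    have h1 : (σ ^ 3 / 3) ^ ((γ + 1) / 3 - 1) = σ ^ (γ - 2) / 3 ^ ((γ - 2) / 3) := by
      rw [div_rpow (by positivity) (by norm_num), ← rpow_natCast σ 3, ← rpow_mul hσ.le]
      congr 2 <;> push_cast <;> ring
    have h2 : σ ^ γ = σ ^ (γ - 2) * σ ^ 2 := by
      rw [← rpow_natCast σ 2, ← rpow_add hσ]; norm_num
    have h3 : (0 : ℝ) < 3 ^ ((γ - 2) / 3) := by positivity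
    simp only [hg, Function.comp, h1, h2]
    field_simp
  have hR3 : 0 ≤ R ^ 3 / 3 := by positivity
  have himg : (fun x : ℝ => x ^ 3 / 3) '' Set.uIcc 0 R ⊆ Set.Icc 0 (R ^ 3 / 3) := by
    rw [Set.uIcc_of_le hR.le]
    rintro _ ⟨x, hx, rfl⟩
    have hx0 := hx.1
    exact ⟨by positivity, by have := hx.2; dsimp only; gcongr⟩
  have hgi : IntervalIntegrable g volume 0 (R ^ 3 / 3) :=
    (intervalIntegrable_rpow' (by linarith)).mul_continuousOn (by fun_prop)
  have hfi : IntervalIntegrable (fun σ : ℝ => σ ^ γ * Real.cos (σ ^ 3 / 3 - a)) volume 0 R :=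
    (intervalIntegrable_rpow' hγ).mul_continuousOn (by fun_prop)
  have h3 : (3 : ℝ) ^ ((γ - 2) / 3) ≠ 0 := by positivity
  have hsub := integral_comp_mul_deriv''' (a := 0) (b := R) (f := fun x : ℝ => x ^ 3 / 3)
    (f' := fun x => x ^ 2) (g := g) (by fun_prop) (fun x _ => ?_) ?_ ?_ ?_
  · norm_num at hsub
    rw [← hsub, ← intervalIntegral.integral_const_mul]
    refine intervalIntegral.integral_congr_ae (Eventually.of_forall fun σ hσ => ?_)
    rw [Set.uIoc_of_le hR.le] at hσ
    exact hpt σ hσ.1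
  · have := ((hasDerivAt_pow 3 x).div_const 3).hasDerivWithinAt (s := Set.Ioi x)
    refine this.congr_deriv ?_
    push_cast
    ring
  · rintro _ ⟨x, hx, rfl⟩
    rw [min_eq_left hR.le] at hx
    have hx0 : 0 < x := hx.1
    have : (0 : ℝ) < x ^ 3 / 3 := by positivity
    exact ((continuousAt_rpow_const _ _ (Or.inl this.ne')).mul
      (by fun_prop)).continuousWithinAt
  · rw [intervalIntegrable_iff_integrableOn_Icc_of_le hR3] at hgi
    exact hgi.mono_set himg
  · rw [Set.uIcc_of_le hR.le, integrableOn_Icc_iff_integrableOn_Ioc]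
    have := ((intervalIntegrable_iff_integrableOn_Ioc_of_le hR.le).1 hfi).const_mul
      ((3 : ℝ) ^ ((γ - 2) / 3))⁻¹
    refine IntegrableOn.congr_fun this (fun σ hσ => ?_) measurableSet_Ioc
    rw [hpt σ hσ.1, inv_mul_cancel_left₀ h3]

theorem generalized_airy_at_zero (γ : ℝ) (hγ₁ : -1 < γ) (hγ₂ : γ < 2) :
    Tendsto
      (fun R : ℝ => ∫ σ in (0 : ℝ)..R, σ ^ γ * Real.cos (σ ^ 3 / 3 - γ * π / 2))
      atTop
      (nhds (-Real.sin (π * (γ - 2) / 3) * (3 : ℝ) ^ ((γ - 2) / 3)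
        * Real.Gamma ((γ + 1) / 3))) ∧
    Tendsto
      (fun R : ℝ => (1 / π) * ∫ σ in (0 : ℝ)..R, σ ^ γ * Real.cos (σ ^ 3 / 3 - γ * π / 2))
      atTop
      (nhds (-(1 / π) * Real.sin (π * (γ - 2) / 3) * (3 : ℝ) ^ ((γ - 2) / 3)
        * Real.Gamma ((γ + 1) / 3))) := by
  have hcube : Tendsto (fun R : ℝ => R ^ 3 / 3) atTop atTop :=
    (tendsto_pow_atTop (by norm_num)).atTop_div_const (by norm_num)
  have h := ((tendsto_integral_rpow_mul_cos (s := (γ + 1) / 3) (by linarith) (by linarith)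
    (γ * π / 2)).comp hcube).const_mul ((3 : ℝ) ^ ((γ - 2) / 3))
  have hcos : Real.cos (π * ((γ + 1) / 3) / 2 - γ * π / 2) = -Real.sin (π * (γ - 2) / 3) := by
    rw [← Real.cos_add_pi_div_two, ← Real.cos_neg]
    ring_nf
  have hmain : Tendsto
      (fun R : ℝ => ∫ σ in (0 : ℝ)..R, σ ^ γ * Real.cos (σ ^ 3 / 3 - γ * π / 2))
      atTop
      (nhds (-Real.sin (π * (γ - 2) / 3) * (3 : ℝ) ^ ((γ - 2) / 3)
        * Real.Gamma ((γ + 1) / 3))) := by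
    rw [hcos] at h
    have e : -Real.sin (π * (γ - 2) / 3) * (3 : ℝ) ^ ((γ - 2) / 3) * Real.Gamma ((γ + 1) / 3) =
        3 ^ ((γ - 2) / 3) * (Real.Gamma ((γ + 1) / 3) * -Real.sin (π * (γ - 2) / 3)) := by ring
    rw [e]
    refine h.congr' ?_
    filter_upwards [eventually_gt_atTop 0] with R hR
    exact (integral_cubic_substitution hγ₁ _ hR).symm
  refine ⟨hmain, ?_⟩
  convert hmain.const_mul (1 / π) using 2
  ring
end

section
/- For every real γ > −1, define for μ ∈ {γ, γ+1, γ+2}: A_μ = −(1/π)·sin(π(μ−2)/3)·3^{(μ−2)/3}·Γ((μ+1)/3), G_μ = −(1/π)·cos(π(μ−2)/3)·3^{(μ−2)/3}·Γ((μ+1)/3), H_μ = (1/π)·3^{(μ−2)/3}·Γ((μ+1)/3). Then the 3×3 determinant det [[A_γ, G_γ, H_γ], [−A_{γ+1}, −G_{γ+1}, H_{γ+1}], [A_{γ+2}, G_{γ+2}, H_{γ+2}]] equals Γ(γ+1)/π². -/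
/-!
Put `a = π (γ - 2) / 3`. The angles in the three rows are `a`, `a + π / 3` and `a + 2 π / 3`, so
after pulling the factor `3 ^ ((μ - 2) / 3) Γ((μ + 1) / 3) / π` out of each row, what remains is a
trigonometric determinant which does not depend on `a` and equals `3 √3 / 2`. The product of the
row factors is `3 ^ (γ - 1) Γ((γ + 1) / 3) Γ((γ + 2) / 3) Γ((γ + 3) / 3) / π ^ 3`, and Gauss's
multiplication formula for three factors (`triplingGamma_eq_Gamma`) turns it into a multiple of
`Γ(γ + 1)`. The multiplication formula follows from the Bohr-Mollerup theorem: its left-hand side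
is log-convex, satisfies the functional equation of `Γ`, and has the value `1` at `1` by the
reflection formula.
-/

open Real

/-- The left-hand side of Gauss's multiplication formula for three factors, normalised so that it
agrees with `Γ` on the positive reals. -/
noncomputable def triplingGamma (s : ℝ) : ℝ :=
  Real.Gamma (s / 3) * Real.Gamma ((s + 1) / 3) * Real.Gamma ((s + 2) / 3)
    * (3 : ℝ) ^ (s - 1) * (√3 / (2 * π))

lemma triplingGamma_pos {s : ℝ} (hs : 0 < s) : 0 < triplingGamma s := by
  have h1 : 0 < Real.Gamma (s / 3) := Real.Gamma_pos_of_pos (by positivity)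
  have h2 : 0 < Real.Gamma ((s + 1) / 3) := Real.Gamma_pos_of_pos (by positivity)
  have h3 : 0 < Real.Gamma ((s + 2) / 3) := Real.Gamma_pos_of_pos (by positivity)
  unfold triplingGamma
  positivity

lemma triplingGamma_add_one {s : ℝ} (hs : 0 < s) :
    triplingGamma (s + 1) = s * triplingGamma s := by
  have h1 : (s + 1 + 2) / 3 = s / 3 + 1 := by ring
  have h2 : s + 1 + 1 = s + 2 := by ring
  have h3 : s + 1 - 1 = (s - 1) + 1 := by ring
  rw [triplingGamma, triplingGamma, h1, h2, h3, Real.Gamma_add_one (by positivity),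
    Real.rpow_add_one (by norm_num)]
  ring

lemma triplingGamma_one : triplingGamma 1 = 1 := by
  have h := Real.Gamma_mul_Gamma_one_sub (1 / 3)
  rw [show (1 : ℝ) - 1 / 3 = (1 + 1) / 3 by norm_num, show π * (1 / 3) = π / 3 by ring,
    Real.sin_pi_div_three] at h
  rw [triplingGamma, h, show ((1 : ℝ) + 2) / 3 = 1 by norm_num, Real.Gamma_one, sub_self,
    Real.rpow_zero]
  have := Real.pi_pos
  field_simp

lemma convexOn_log_Gamma_add_div_three {c : ℝ} (hc : 0 ≤ c) :
    ConvexOn ℝ (Set.Ioi 0) fun s : ℝ => Real.log (Real.Gamma ((s + c) / 3)) := by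
  refine ⟨convex_Ioi 0, fun x hx y hy a b ha hb hab => ?_⟩
  have hx' : 0 < x := hx
  have hy' : 0 < y := hy
  have h := Real.convexOn_log_Gamma.2 (x := (x + c) / 3) (y := (y + c) / 3)
    (Set.mem_Ioi.2 (by positivity)) (Set.mem_Ioi.2 (by positivity)) ha hb hab
  have e : a • ((x + c) / 3) + b • ((y + c) / 3) = (a • x + b • y + c) / 3 := by
    simp only [smul_eq_mul]
    linear_combination (c / 3) * hab
  rw [e] at h
  exact h

lemma log_triplingGamma {s : ℝ} (hs : 0 < s) :
    Real.log (triplingGamma s) = Real.log (Real.Gamma ((s + 0) / 3))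
      + Real.log (Real.Gamma ((s + 1) / 3)) + Real.log (Real.Gamma ((s + 2) / 3))
      + Real.log 3 * s + (Real.log (√3 / (2 * π)) - Real.log 3) := by
  have h1 : Real.Gamma (s / 3) ≠ 0 := (Real.Gamma_pos_of_pos (by positivity)).ne'
  have h2 : Real.Gamma ((s + 1) / 3) ≠ 0 := (Real.Gamma_pos_of_pos (by positivity)).ne'
  have h3 : Real.Gamma ((s + 2) / 3) ≠ 0 := (Real.Gamma_pos_of_pos (by positivity)).ne'
  have h4 : (3 : ℝ) ^ (s - 1) ≠ 0 := by positivity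
  have h5 : √3 / (2 * π) ≠ 0 := by positivity
  rw [triplingGamma, Real.log_mul (by positivity) h5, Real.log_mul (by positivity) h4,
    Real.log_mul (by positivity) h3, Real.log_mul h1 h2, Real.log_rpow (by norm_num), add_zero]
  ring

lemma convexOn_log_triplingGamma : ConvexOn ℝ (Set.Ioi 0) (Real.log ∘ triplingGamma) := by
  have hlin : ConvexOn ℝ (Set.Ioi 0) fun s : ℝ => Real.log 3 * s :=
    (convexOn_id (convex_Ioi (0 : ℝ))).smul (Real.log_pos (by norm_num)).le
  refine (((((convexOn_log_Gamma_add_div_three le_rfl).add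
    (convexOn_log_Gamma_add_div_three zero_le_one)).add
    (convexOn_log_Gamma_add_div_three zero_le_two)).add hlin).add_const
    (Real.log (√3 / (2 * π)) - Real.log 3)).congr fun s hs => ?_
  exact (log_triplingGamma hs).symm

/-- Gauss's multiplication formula for three factors, on the positive reals. -/
lemma triplingGamma_eq_Gamma {s : ℝ} (hs : 0 < s) : triplingGamma s = Real.Gamma s :=
  Real.eq_Gamma_of_log_convex convexOn_log_triplingGamma triplingGamma_add_one
    triplingGamma_pos triplingGamma_one hs

/-- The Wronskian determinant at `x = 0` of the fundamental system
`(Ai_γ, Gi_γ, Hi_γ)` of the ODE `(1+γ)u + x u' - u''' = 0`, computed from the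
values `A μ = Ai_μ(0)`, `G μ = Gi_μ(0)`, `H μ = Hi_μ(0)`. -/
theorem wronskian_determinant (γ : ℝ) (hγ : -1 < γ) (A G H : ℝ → ℝ)
    (hA : ∀ μ : ℝ, A μ = -(1 / π) * Real.sin (π * (μ - 2) / 3)
        * (3 : ℝ) ^ ((μ - 2) / 3) * Real.Gamma ((μ + 1) / 3))
    (hG : ∀ μ : ℝ, G μ = -(1 / π) * Real.cos (π * (μ - 2) / 3)
        * (3 : ℝ) ^ ((μ - 2) / 3) * Real.Gamma ((μ + 1) / 3))
    (hH : ∀ μ : ℝ, H μ = (1 / π)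
        * (3 : ℝ) ^ ((μ - 2) / 3) * Real.Gamma ((μ + 1) / 3)) :
    Matrix.det !![A γ, G γ, H γ;
                  -A (γ + 1), -G (γ + 1), H (γ + 1);
                  A (γ + 2), G (γ + 2), H (γ + 2)]
      = Real.Gamma (γ + 1) / π ^ 2 := by
  have hG3 := triplingGamma_eq_Gamma (s := γ + 1) (by linarith)
  have hs2 : Real.sin (2 * (π / 3)) = √3 / 2 := by
    rw [Real.sin_two_mul, Real.sin_pi_div_three, Real.cos_pi_div_three]
    ring
  have hc2 : Real.cos (2 * (π / 3)) = -(1 / 2) := by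
    rw [Real.cos_two_mul, Real.cos_pi_div_three]
    norm_num
  have ha1 : π * (γ + 1 - 2) / 3 = π * (γ - 2) / 3 + π / 3 := by ring
  have ha2 : π * (γ + 2 - 2) / 3 = π * (γ - 2) / 3 + 2 * (π / 3) := by ring
  have hpow : (3 : ℝ) ^ (γ + 1 - 1)
      = 3 * ((3 : ℝ) ^ ((γ - 2) / 3) * (3 : ℝ) ^ ((γ + 1 - 2) / 3)
        * (3 : ℝ) ^ ((γ + 2 - 2) / 3)) := by
    rw [← Real.rpow_add (by norm_num), ← Real.rpow_add (by norm_num), mul_comm,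
      ← Real.rpow_add_one (by norm_num)]
    congr 1
    ring
  rw [← hG3, triplingGamma, hpow, Matrix.det_fin_three]
  simp only [Matrix.of_apply, Matrix.cons_val', Matrix.cons_val_zero, Matrix.cons_val_one,
    Matrix.cons_val, hA, hG, hH]
  rw [ha1, ha2, Real.sin_add, Real.cos_add, Real.sin_add, Real.cos_add, hs2, hc2,
    Real.sin_pi_div_three, Real.cos_pi_div_three, show γ + 1 + 2 = γ + 2 + 1 by ring]
  have hsc := Real.sin_sq_add_cos_sq (π * (γ - 2) / 3)
  generalize Real.sin (π * (γ - 2) / 3) = S at *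
  generalize Real.cos (π * (γ - 2) / 3) = C at *
  generalize (3 : ℝ) ^ ((γ - 2) / 3) = p
  generalize (3 : ℝ) ^ ((γ + 1 - 2) / 3) = q
  generalize (3 : ℝ) ^ ((γ + 2 - 2) / 3) = r
  generalize Real.Gamma ((γ + 1) / 3) = x
  generalize Real.Gamma ((γ + 1 + 1) / 3) = y
  generalize Real.Gamma ((γ + 2 + 1) / 3) = z
  generalize √(3 : ℝ) = w at *
  linear_combination (p * q * r * x * y * z * (3 * w / 2) / π ^ 3) * hsc
end

section
/- For every real γ with −1 < γ < 0 and every x ∈ ℝ, the following three Wronskian identities hold: (i) Ai_{γ+1}(x)·Gi_γ(x) − Ai_γ(x)·Gi_{γ+1}(x) = (Γ(1+γ)/π) · Ai_{−1−γ}(x); (ii) Ai_γ(x)·Hi_{γ+1}(x) + Ai_{γ+1}(x)·Hi_γ(x) = (Γ(1+γ)/π) · ( −cos(πγ)·Ai_{−1−γ}(x) − sin(πγ)·Gi_{−1−γ}(x) ); (iii) Gi_γ(x)·Hi_{γ+1}(x) + Gi_{γ+1}(x)·Hi_γ(x) = (Γ(1+γ)/π) · ( sin(πγ)·Ai_{−1−γ}(x)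 − cos(πγ)·Gi_{−1−γ}(x) + Hi_{−1−γ}(x) ). -/
/-!
Let `H_μ(z) = ∫_0^∞ r^μ exp(-r³/3 + rz) dr` (`airyH`), an entire function with `H_μ' = H_{μ+1}`,
equal to `π Hi_μ` on the real line. Integration by parts gives the recurrence
`H_{μ+3} = z H_{μ+1} + (μ+1) H_μ`, a third order linear differential equation for `H_μ`.

Rotating the contour of the oscillatory integrals by the angle `π/6` expresses the other two
functions through `H_μ` as well (`airy_add_scorer`): with `ω = exp(2πi/3)`,
`Ai_μ(x) + i Gi_μ(x) = (1/π) exp(iπ/6 - iπμ/3) H_μ(ωx)`.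
The rotation is Cauchy's theorem on a rectangle in the variable `log σ`; the arc at infinity is
controlled by Jordan's lemma, which is where `μ < 2` is used.

All three identities are then values of one complex identity (`airyH_wronskian`), which expresses
`H_γ(ωz) H_{γ+1}(z) - ω H_{γ+1}(ωz) H_γ(z)` as `Γ(1+γ)` times a combination of `H_{-1-γ}(z)` and
`H_{-1-γ}(ωz)`. Both sides solve `w''' = z w' - γ w`, so it suffices to compare the values and the
first two derivatives at `0`. These are explicit products of Gamma values, and they agree by the
reflection formula together with Gauss's triplication formula (`Gamma_triplication`).
At `z = x` the real and imaginary parts are the second and third identities. At `z = ωx` the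
values at `ω²x` are conjugate to those at `ωx`, which gives the first identity.
-/

open Real MeasureTheory Filter intervalIntegral

/-! ### The entire function `H_μ` -/

/-- The entire function `H_μ(z) = ∫_0^∞ r^μ exp(-r³/3 + rz) dr` (for `μ > -1`), that is `π Hi_μ`
continued to the complex plane. -/
noncomputable def airyH (μ : ℝ) (z : ℂ) : ℂ :=
  ∫ r in Set.Ioi (0 : ℝ), ((r ^ μ : ℝ) : ℂ) * Complex.exp (-(r : ℂ) ^ 3 / 3 + r * z)

lemma integrableOn_airyH_real {μ : ℝ} (hμ : -1 < μ) (c : ℝ) :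
    IntegrableOn (fun r : ℝ => r ^ μ * Real.exp (-r ^ 3 / 3 + r * c)) (Set.Ioi 0) := by
  have h1 := (integrableOn_rpow_mul_exp_neg_mul_rpow (p := 3) (b := 1 / 6) hμ
    (by norm_num) (by norm_num)).const_mul (Real.exp ((|c| + 1) ^ 3 / 3))
  refine Integrable.mono' h1 ?_ ?_
  · refine ContinuousOn.aestronglyMeasurable ?_ measurableSet_Ioi
    intro r hr
    have : r ≠ 0 := ne_of_gt hr
    exact (ContinuousAt.mul (Real.continuousAt_rpow_const _ _ (Or.inl this))
      (by fun_prop)).continuousWithinAt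
  · filter_upwards [ae_restrict_mem measurableSet_Ioi] with r hr
    have hr' : 0 < r := hr
    have hp : 0 < r ^ μ := Real.rpow_pos_of_pos hr' _
    rw [Real.norm_of_nonneg (by positivity), mul_left_comm, ← Real.exp_add]
    have h3 : r ^ (3 : ℝ) = r ^ 3 := by exact_mod_cast Real.rpow_natCast r 3
    rw [h3]
    refine mul_le_mul_of_nonneg_left (Real.exp_le_exp.2 ?_) hp.le
    -- Young's inequality for `r * s ^ 2` with `s = |c| + 1`
    have hc := le_abs_self c
    have hc0 := abs_nonneg c
    have h4 : 0 ≤ (r - (|c| + 1)) ^ 2 * (r + 2 * (|c| + 1)) := by positivity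
    have h5 : r * c ≤ r * ((|c| + 1) ^ 2 / 2) := by
      gcongr
      nlinarith
    nlinarith

lemma norm_airyH_integrand {μ : ℝ} {r : ℝ} (hr : 0 < r) (z : ℂ) :
    ‖((r ^ μ : ℝ) : ℂ) * Complex.exp (-(r : ℂ) ^ 3 / 3 + r * z)‖
      = r ^ μ * Real.exp (-r ^ 3 / 3 + r * z.re) := by
  have : (-(r : ℂ) ^ 3 / 3 + r * z) = ((-r ^ 3 / 3 : ℝ) : ℂ) + r * z := by push_cast; ring
  rw [norm_mul, Complex.norm_exp, Complex.norm_real,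
    Real.norm_of_nonneg (Real.rpow_pos_of_pos hr μ).le, this, Complex.add_re,
    Complex.ofReal_re, Complex.re_ofReal_mul]

lemma continuousOn_airyH_integrand (μ : ℝ) (z : ℂ) :
    ContinuousOn (fun r : ℝ => ((r ^ μ : ℝ) : ℂ) * Complex.exp (-(r : ℂ) ^ 3 / 3 + r * z))
      (Set.Ioi 0) := by
  intro r hr
  have : r ≠ 0 := ne_of_gt hr
  refine (ContinuousAt.mul ?_ (by fun_prop)).continuousWithinAt
  exact Complex.continuous_ofReal.continuousAt.comp
    (Real.continuousAt_rpow_const _ _ (Or.inl this))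

lemma integrableOn_airyH {μ : ℝ} (hμ : -1 < μ) (z : ℂ) :
    IntegrableOn (fun r : ℝ => ((r ^ μ : ℝ) : ℂ) * Complex.exp (-(r : ℂ) ^ 3 / 3 + r * z))
      (Set.Ioi 0) := by
  refine Integrable.mono' (integrableOn_airyH_real hμ z.re)
    ((continuousOn_airyH_integrand μ z).aestronglyMeasurable measurableSet_Ioi) ?_
  filter_upwards [ae_restrict_mem measurableSet_Ioi] with r hr
  exact (norm_airyH_integrand hr z).le

lemma hasDerivAt_airyH {μ : ℝ} (hμ : -1 < μ) (z : ℂ) :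
    HasDerivAt (airyH μ) (airyH (μ + 1) z) z := by
  refine (hasDerivAt_integral_of_dominated_loc_of_deriv_le (μ := volume.restrict (Set.Ioi 0))
    (F := fun z (r : ℝ) => ((r ^ μ : ℝ) : ℂ) * Complex.exp (-(r : ℂ) ^ 3 / 3 + r * z))
    (F' := fun z (r : ℝ) => ((r ^ (μ + 1) : ℝ) : ℂ) * Complex.exp (-(r : ℂ) ^ 3 / 3 + r * z))
    (bound := fun r => r ^ (μ + 1) * Real.exp (-r ^ 3 / 3 + r * (z.re + 1)))
    (Metric.ball_mem_nhds z one_pos) ?_ (integrableOn_airyH hμ z) ?_ ?_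
    (integrableOn_airyH_real (by linarith) _) ?_).2
  · exact Eventually.of_forall fun z =>
      (continuousOn_airyH_integrand μ z).aestronglyMeasurable measurableSet_Ioi
  · exact (continuousOn_airyH_integrand (μ + 1) z).aestronglyMeasurable measurableSet_Ioi
  · filter_upwards [ae_restrict_mem measurableSet_Ioi] with r hr w hw
    have hr' : 0 < r := hr
    rw [norm_airyH_integrand hr w]
    have h1 : w.re - z.re ≤ 1 := by
      have := Complex.abs_re_le_norm (w - z)
      rw [Metric.mem_ball, dist_eq_norm] at hw
      rw [Complex.sub_re] at this
      linarith [le_abs_self (w.re - z.re)]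
    have h2 : w.re ≤ z.re + 1 := by linarith
    gcongr
  · filter_upwards [ae_restrict_mem measurableSet_Ioi] with r hr w _
    have hr' : 0 < r := hr
    have h1 : HasDerivAt (fun w : ℂ => -(r : ℂ) ^ 3 / 3 + r * w) (r : ℂ) w :=
      (hasDerivAt_const_mul (r : ℂ)).const_add _
    refine (h1.cexp.const_mul ((r ^ μ : ℝ) : ℂ)).congr_deriv ?_
    rw [Real.rpow_add hr', Real.rpow_one]
    push_cast
    ring

/-- The three-term recurrence, obtained by integrating the derivative of
`r^(μ+1) exp(-r³/3 + rz)` over `(0, ∞)`. -/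
lemma airyH_add_three {μ : ℝ} (hμ : -1 < μ) (z : ℂ) :
    airyH (μ + 3) z = z * airyH (μ + 1) z + (μ + 1) * airyH μ z := by
  have i0 := (integrableOn_airyH hμ z).const_mul ((μ : ℂ) + 1)
  have i1 := (integrableOn_airyH (μ := μ + 1) (by linarith) z)
  have i1' := i1.const_mul z
  have i3 := (integrableOn_airyH (μ := μ + 3) (by linarith) z)
  have hd : ∀ r ∈ Set.Ioi (0 : ℝ), HasDerivAt
      (fun r : ℝ => ((r ^ (μ + 1) : ℝ) : ℂ) * Complex.exp (-(r : ℂ) ^ 3 / 3 + r * z))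
      (((μ : ℂ) + 1) * (((r ^ μ : ℝ) : ℂ) * Complex.exp (-(r : ℂ) ^ 3 / 3 + r * z))
        + z * (((r ^ (μ + 1) : ℝ) : ℂ) * Complex.exp (-(r : ℂ) ^ 3 / 3 + r * z))
        - (((r ^ (μ + 3) : ℝ) : ℂ) * Complex.exp (-(r : ℂ) ^ 3 / 3 + r * z))) r := by
    intro r hr
    have hr' : 0 < r := hr
    have h1 := (Real.hasDerivAt_rpow_const (x := r) (p := μ + 1) (Or.inl hr'.ne')).ofReal_comp
    have h0 : HasDerivAt (fun w : ℂ => -w ^ 3 / 3 + w * z) (-r ^ 2 + z) (r : ℂ) := by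
      have := ((hasDerivAt_pow 3 (r : ℂ)).neg.div_const 3).add (hasDerivAt_mul_const z)
      refine this.congr_deriv ?_
      push_cast
      ring
    have h2 := h0.cexp.comp_ofReal
    refine (h1.mul h2).congr_deriv ?_
    have e1 : r ^ (μ + 1) = r ^ μ * r := by rw [Real.rpow_add hr', Real.rpow_one]
    have e3 : r ^ (μ + 3) = r ^ μ * r ^ 3 := by
      rw [Real.rpow_add hr']; congr 1; exact_mod_cast Real.rpow_natCast r 3
    have e0 : μ + 1 - 1 = μ := by ring
    rw [e0, e3, e1]
    push_cast
    ring
  have hi := (i0.add i1').sub i3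
  have ht := tendsto_zero_of_hasDerivAt_of_integrableOn_Ioi hd hi i1
  have hI := integral_Ioi_of_hasDerivAt_of_tendsto ?_ hd hi ht
  · have e1 := integral_sub (i0.add i1') i3
    have e2 := integral_add i0 i1'
    simp only [Pi.add_apply] at e1
    rw [e1, e2, MeasureTheory.integral_const_mul, MeasureTheory.integral_const_mul] at hI
    simp only [Real.zero_rpow (by linarith : μ + 1 ≠ 0), Complex.ofReal_zero, zero_mul,
      sub_zero] at hI
    unfold airyH
    linear_combination -hI
  · refine (ContinuousAt.mul ?_ (by fun_prop)).continuousWithinAt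
    exact Complex.continuous_ofReal.continuousAt.comp
      (Real.continuousAt_rpow_const _ _ (Or.inr (by linarith)))

lemma airyH_zero {μ : ℝ} (hμ : -1 < μ) :
    airyH μ 0 = ((3 ^ ((μ + 1) / 3) / 3 * Real.Gamma ((μ + 1) / 3) : ℝ) : ℂ) := by
  have h := integral_rpow_mul_exp_neg_mul_rpow (p := 3) (q := μ) (b := 1 / 3)
    (by norm_num) hμ (by norm_num)
  have e : ((1 / 3 : ℝ)) ^ (-(μ + 1) / 3) * (1 / 3) = 3 ^ ((μ + 1) / 3) / 3 := by
    rw [one_div, Real.inv_rpow (by norm_num), ← Real.rpow_neg (by norm_num)]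
    ring_nf
  rw [e] at h
  rw [← h, airyH, ← integral_complex_ofReal]
  refine setIntegral_congr_fun measurableSet_Ioi fun r hr => ?_
  have h3 : r ^ (3 : ℝ) = r ^ 3 := by exact_mod_cast Real.rpow_natCast r 3
  simp only [h3]
  push_cast
  ring_nf

lemma airyH_conj (μ : ℝ) (z : ℂ) :
    airyH μ (starRingEnd ℂ z) = starRingEnd ℂ (airyH μ z) := by
  rw [airyH, airyH, ← integral_conj]
  congr 1
  ext r
  rw [map_mul, ← Complex.exp_conj]
  simp [Complex.conj_ofNat]

lemma scorerHi_eq_airyH (μ x : ℝ) : ((scorerHi μ x : ℝ) : ℂ) = 1 / π * airyH μ x := by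
  rw [scorerHi, airyH, Complex.ofReal_mul, ← integral_complex_ofReal]
  push_cast
  rfl

/-! ### The triplication formula for `Γ` -/

/-- Gauss's multiplication formula for `Γ` with three factors, obtained from the Bohr-Mollerup
theorem. -/
lemma Gamma_triplication {s : ℝ} (hs : 0 < s) :
    Real.Gamma (s / 3) * Real.Gamma (s / 3 + 1 / 3) * Real.Gamma (s / 3 + 2 / 3)
      = 2 * π / √3 * 3 ^ (1 - s) * Real.Gamma s := by
  set f : ℝ → ℝ := fun s => Real.Gamma (s / 3) * Real.Gamma (s / 3 + 1 / 3)
    * Real.Gamma (s / 3 + 2 / 3) * 3 ^ (s - 1) / (2 * π / √3) with hf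
  have h3 : (0 : ℝ) < √3 := by positivity
  have hc : 0 < 2 * π / √3 := by positivity
  have hpos : ∀ {y : ℝ}, 0 < y → 0 < f y := by
    intro y hy
    have := Real.Gamma_pos_of_pos (s := y / 3) (by positivity)
    have := Real.Gamma_pos_of_pos (s := y / 3 + 1 / 3) (by positivity)
    have := Real.Gamma_pos_of_pos (s := y / 3 + 2 / 3) (by positivity)
    simp only [hf]
    positivity
  have hfeq : ∀ {y : ℝ}, 0 < y → f (y + 1) = y * f y := by
    intro y hy
    simp only [hf]
    have e1 : (y + 1) / 3 = y / 3 + 1 / 3 := by ring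
    have e2 : y / 3 + 1 / 3 + 1 / 3 = y / 3 + 2 / 3 := by ring
    have e3 : y / 3 + 1 / 3 + 2 / 3 = y / 3 + 1 := by ring
    have e4 : y + 1 - 1 = (y - 1) + 1 := by ring
    rw [e1, e2, e3, Real.Gamma_add_one (by positivity), e4, Real.rpow_add (by norm_num),
      Real.rpow_one]
    ring
  have hone : f 1 = 1 := by
    have h := Real.Gamma_mul_Gamma_one_sub (1 / 3)
    have e : π * (1 / 3) = π / 3 := by ring
    have e1 : (1 : ℝ) - 1 / 3 = 1 / 3 + 1 / 3 := by norm_num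
    rw [e, Real.sin_pi_div_three, e1] at h
    have e2 : (1 / 3 : ℝ) + 2 / 3 = 1 := by norm_num
    simp only [hf]
    rw [h, e2, Real.Gamma_one, sub_self, Real.rpow_zero]
    field_simp
  have hlin : ∀ c : ℝ, 0 ≤ c → ConvexOn ℝ (Set.Ioi (0 : ℝ))
      (fun s : ℝ => Real.log (Real.Gamma (s / 3 + c))) := by
    intro c hc
    refine ⟨convex_Ioi 0, ?_⟩
    intro x hx y hy a b ha hb hab
    have hx' : 0 < x := hx
    have hy' : 0 < y := hy
    have := Real.convexOn_log_Gamma.2 (x := x / 3 + c) (y := y / 3 + c)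
      (by simp only [Set.mem_Ioi]; positivity) (by simp only [Set.mem_Ioi]; positivity) ha hb hab
    have e : a • (x / 3 + c) + b • (y / 3 + c) = (a • x + b • y) / 3 + c := by
      simp only [smul_eq_mul]
      linear_combination c * hab
    rw [e] at this
    exact this
  have hlog : ConvexOn ℝ (Set.Ioi (0 : ℝ))
      (fun s : ℝ => (s - 1) * Real.log 3 - Real.log (2 * π / √3)) := by
    refine ⟨convex_Ioi 0, ?_⟩
    intro x hx y hy a b ha hb hab
    simp only [smul_eq_mul]
    apply le_of_eq
    linear_combination (Real.log 3 + Real.log (2 * π / √3)) * hab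
  have hconv : ConvexOn ℝ (Set.Ioi (0 : ℝ)) (Real.log ∘ f) := by
    refine ((((hlin 0 le_rfl).add (hlin (1 / 3) (by norm_num))).add
      (hlin (2 / 3) (by norm_num))).add hlog).congr ?_
    intro s hs
    have hs' : 0 < s := hs
    have h0 := (Real.Gamma_pos_of_pos (s := s / 3) (by positivity)).ne'
    have h1 := (Real.Gamma_pos_of_pos (s := s / 3 + 1 / 3) (by positivity)).ne'
    have h2 := (Real.Gamma_pos_of_pos (s := s / 3 + 2 / 3) (by positivity)).ne'
    simp only [Function.comp_apply, hf, Pi.add_apply, add_zero]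
    rw [Real.log_div (by positivity) hc.ne', Real.log_mul (by positivity) (by positivity),
      Real.log_mul (by positivity) h2, Real.log_mul h0 h1, Real.log_rpow (by norm_num)]
    ring
  have key : f s = Real.Gamma s := Real.eq_Gamma_of_log_convex hconv hfeq hpos hone hs
  rw [← key]
  simp only [hf]
  have e : (3 : ℝ) ^ (1 - s) * 3 ^ (s - 1) = 1 := by
    rw [← Real.rpow_add (by norm_num)]; simp
  field_simp
  exact e.symm

/-! ### The Wronskian of `H_γ(z)` and `H_γ(ωz)` -/

/-- Uniqueness for the entire solutions of `f''' = z f' + c f`: a zero 2-jet at `0` forces every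
Taylor coefficient at `0` to vanish. -/
lemma entire_eq_zero_of_ode {c : ℂ} {f f₁ f₂ : ℂ → ℂ} (h0 : ∀ z, HasDerivAt f (f₁ z) z)
    (h1 : ∀ z, HasDerivAt f₁ (f₂ z) z) (h2 : ∀ z, HasDerivAt f₂ (z * f₁ z + c * f z) z)
    (e0 : f 0 = 0) (e1 : f₁ 0 = 0) (e2 : f₂ 0 = 0) (z : ℂ) : f z = 0 := by
  have hd : Differentiable ℂ f := fun z => (h0 z).differentiableAt
  have hcd : ContDiff ℂ ⊤ f := hd.contDiff
  have i0 : iteratedDeriv 0 f = f := iteratedDeriv_zero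
  have i1 : iteratedDeriv 1 f = f₁ := by
    rw [iteratedDeriv_one]; exact funext fun z => (h0 z).deriv
  have i2 : iteratedDeriv 2 f = f₂ := by
    rw [iteratedDeriv_succ, i1]; exact funext fun z => (h1 z).deriv
  have hdn : ∀ n z, HasDerivAt (iteratedDeriv n f) (iteratedDeriv (n + 1) f z) z := by
    intro n z
    rw [iteratedDeriv_succ]
    exact ((hcd.differentiable_iteratedDeriv n
      (by exact_mod_cast WithTop.coe_lt_top _)) z).hasDerivAt
  have hrec : ∀ n : ℕ, ∀ z, iteratedDeriv (n + 3) f z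
      = z * iteratedDeriv (n + 1) f z + (n + c) * iteratedDeriv n f z := by
    intro n
    induction n with
    | zero =>
      intro z
      rw [iteratedDeriv_succ, zero_add, i2, (h2 z).deriv, i1, i0]
      simp
    | succ n ih =>
      intro z
      have e : n + 1 + 3 = (n + 3) + 1 := by ring
      rw [e, iteratedDeriv_succ, funext ih]
      have := ((hasDerivAt_id z).mul (hdn (n + 1) z)).add ((hdn n z).const_mul ((n : ℂ) + c))
      refine this.deriv.trans ?_
      push_cast
      simp only [id]
      ring
  have hz : ∀ n : ℕ, iteratedDeriv n f 0 = 0 ∧ iteratedDeriv (n + 1) f 0 = 0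
      ∧ iteratedDeriv (n + 2) f 0 = 0 := by
    intro n
    induction n with
    | zero => exact ⟨by rw [i0, e0], by rw [i1, e1], by rw [i2, e2]⟩
    | succ n ih =>
      refine ⟨ih.2.1, ih.2.2, ?_⟩
      have := hrec n 0
      rw [ih.1] at this
      simpa using this
  rw [← Complex.taylorSeries_eq_of_entire hd 0 z]
  simp [(hz _).1]

/-- The Gamma function identity behind the matching of the values at `0`. -/
lemma gamma_match {γ t α β P G : ℝ} (ht0 : 0 < t) (ht1 : t < 1) (hαβ : α + β = t + γ + 1)
    (hP : P * Real.Gamma (1 - t) = 2 * π / √3 * 3 ^ (-γ) * G) :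
    √3 * (3 ^ α / 3 * (3 ^ β / 3) * P)
      = G * (3 ^ t / 3 * Real.Gamma t) * (2 * Real.sin (π * t)) := by
  have h := Real.Gamma_mul_Gamma_one_sub t
  have hs : 0 < Real.sin (π * t) := Real.sin_pos_of_pos_of_lt_pi (by positivity)
    (by nlinarith [Real.pi_pos])
  have hg : 0 < Real.Gamma (1 - t) := Real.Gamma_pos_of_pos (by linarith)
  have h3 : (0 : ℝ) < √3 := by positivity
  have e : (3 : ℝ) ^ α * 3 ^ β = 3 ^ t * 3 ^ γ * 3 := by
    rw [← Real.rpow_add (by norm_num), hαβ, Real.rpow_add (by norm_num),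
      Real.rpow_add (by norm_num), Real.rpow_one]
  have e' : (3 : ℝ) ^ γ * 3 ^ (-γ) = 1 := by
    rw [← Real.rpow_add (by norm_num)]; simp
  rw [eq_div_iff hs.ne'] at h
  have hP' : √3 * (P * Real.Gamma (1 - t)) = 2 * π * 3 ^ (-γ) * G := by
    rw [hP]; field_simp
  apply mul_right_cancel₀ hg.ne'
  linear_combination (√3 * P * Real.Gamma (1 - t) / 9) * e + (3 ^ t * 3 ^ γ / 3) * hP'
    + (2 * π * 3 ^ t * G / 3) * e' - (2 * G * 3 ^ t / 3) * h

lemma hasDerivAt_airyH_mul {μ ν : ℝ} (hμ : -1 < μ) (hν : ν = μ + 1) (w z : ℂ) :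
    HasDerivAt (fun z => airyH μ (w * z)) (w * airyH ν (w * z)) z := by
  subst hν
  have := (hasDerivAt_airyH hμ (w * z)).comp z (hasDerivAt_const_mul w)
  rw [mul_comm] at this
  exact this

/-- The Wronskian of `H_γ(z)` and `H_γ(ωz)`, where `ω = exp(2πi/3)`, in terms of `H_{-1-γ}`.
Both sides solve `w''' = z w' - γ w`, the equation adjoint to the one for `H_γ`, and they have the
same 2-jet at `0`. -/
lemma airyH_wronskian {γ : ℝ} (hγ₁ : -1 < γ) (hγ₂ : γ < 0) {e u : ℂ}
    (he : e = Complex.exp (π / 3 * Complex.I)) (hu : u = Complex.exp (π * γ / 3 * Complex.I))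
    (z : ℂ) :
    airyH γ (e ^ 2 * z) * airyH (γ + 1) z - e ^ 2 * airyH (γ + 1) (e ^ 2 * z) * airyH γ z
      = Real.Gamma (1 + γ) *
        (e * u * airyH (-1 - γ) z - e * u⁻¹ * airyH (-1 - γ) (e ^ 2 * z)) := by
  have he' : e = 1 / 2 + √3 / 2 * Complex.I := by
    rw [he, Complex.exp_mul_I]
    have h1 : Complex.cos (π / 3) = 1 / 2 := by
      have := congrArg (fun r : ℝ => (r : ℂ)) Real.cos_pi_div_three
      push_cast at this; exact this
    have h2 : Complex.sin (π / 3) = √3 / 2 := by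
      have := congrArg (fun r : ℝ => (r : ℂ)) Real.sin_pi_div_three
      push_cast at this; exact this
    rw [h1, h2]
  have h3 : ((√3 : ℝ) : ℂ) ^ 2 = 3 := by
    rw [← Complex.ofReal_pow, Real.sq_sqrt (by norm_num)]; norm_num
  have hee : e ^ 2 = e - 1 := by
    rw [he']
    linear_combination (1 / 4 * Complex.I ^ 2) * h3 + 3 / 4 * Complex.I_sq
  have hq : e ^ 2 - e + 1 = 0 := by linear_combination hee
  have he3 : e ^ 3 = -1 := by linear_combination (e + 1) * hee
  have hei : e⁻¹ = 1 - e := by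
    apply inv_eq_of_mul_eq_one_right
    linear_combination -hee
  have h3I : (√3 : ℂ) * Complex.I = 2 * e - 1 := by rw [he']; ring
  have hu0 : u ≠ 0 := by rw [hu]; exact Complex.exp_ne_zero _
  have hsin : ∀ k : ℕ, 2 * ((Real.sin (π * ((k - γ) / 3)) : ℝ) : ℂ) * Complex.I
      = e ^ k * u⁻¹ - e⁻¹ ^ k * u := by
    intro k
    have e1 : e ^ k * u⁻¹ = Complex.exp ((π * ((k - γ) / 3)) * Complex.I) := by
      rw [he, hu, ← Complex.exp_nat_mul, ← Complex.exp_neg, ← Complex.exp_add]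
      congr 1; ring
    have e2 : e⁻¹ ^ k * u = Complex.exp (-(π * ((k - γ) / 3)) * Complex.I) := by
      rw [he, hu, ← Complex.exp_neg, ← Complex.exp_nat_mul, ← Complex.exp_add]
      congr 1; ring
    rw [e1, e2]
    push_cast
    rw [Complex.sin]
    linear_combination -(Complex.exp (-(π * ((k - γ) / 3)) * Complex.I)
      - Complex.exp ((π * ((k - γ) / 3)) * Complex.I)) * Complex.I_sq * (-1)
  have htri := Gamma_triplication (s := 1 + γ) (by linarith)
  have a0 := airyH_zero (μ := γ) hγ₁
  have a1 := airyH_zero (μ := γ + 1) (by linarith)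
  have a2 := airyH_zero (μ := γ + 2) (by linarith)
  have b0 := airyH_zero (μ := -1 - γ) (by linarith)
  have b1 := airyH_zero (μ := -1 - γ + 1) (by linarith)
  have b2 := airyH_zero (μ := -1 - γ + 2) (by linarith)
  have ng : (1 : ℝ) - (1 + γ) = -γ := by ring
  rw [ng] at htri
  have r0 := gamma_match (γ := γ) (t := (((0 : ℕ) : ℝ) - γ) / 3) (α := (γ + 1) / 3)
    (β := (γ + 1 + 1) / 3) (G := Real.Gamma (1 + γ))
    (P := Real.Gamma ((γ + 1) / 3) * Real.Gamma ((γ + 1 + 1) / 3)) (by simp; linarith)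
    (by simp; linarith) (by simp; ring) (by rw [← htri]; push_cast; ring_nf)
  have r1 := gamma_match (γ := γ) (t := (((1 : ℕ) : ℝ) - γ) / 3) (α := (γ + 1) / 3)
    (β := (γ + 2 + 1) / 3) (G := Real.Gamma (1 + γ))
    (P := Real.Gamma ((γ + 1) / 3) * Real.Gamma ((γ + 2 + 1) / 3)) (by push_cast; linarith)
    (by push_cast; linarith) (by push_cast; ring) (by rw [← htri]; push_cast; ring_nf)
  have r2 := gamma_match (γ := γ) (t := (((2 : ℕ) : ℝ) - γ) / 3) (α := (γ + 1 + 1) / 3)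
    (β := (γ + 2 + 1) / 3) (G := Real.Gamma (1 + γ))
    (P := Real.Gamma ((γ + 1 + 1) / 3) * Real.Gamma ((γ + 2 + 1) / 3)) (by push_cast; linarith)
    (by push_cast; linarith) (by push_cast; ring) (by rw [← htri]; push_cast; ring_nf)
  have n0 : (-1 - γ + 1) / 3 = (((0 : ℕ) : ℝ) - γ) / 3 := by push_cast; ring
  have n1 : (-1 - γ + 1 + 1) / 3 = (((1 : ℕ) : ℝ) - γ) / 3 := by push_cast; ring
  have n2 : (-1 - γ + 2 + 1) / 3 = (((2 : ℕ) : ℝ) - γ) / 3 := by push_cast; ring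
  rw [n0] at b0
  rw [n1] at b1
  rw [n2] at b2
  have c0 : (2 * e - 1) * (airyH γ 0 * airyH (γ + 1) 0)
      = Real.Gamma (1 + γ) * airyH (-1 - γ) 0 * (u⁻¹ - u) := by
    have h := hsin 0
    have r := congrArg (fun r : ℝ => (r : ℂ)) r0
    rw [pow_zero, pow_zero, one_mul, one_mul] at h
    rw [← h, ← h3I, a0, a1, b0]
    simp only [Complex.ofReal_mul, Complex.ofReal_div, Complex.ofReal_ofNat] at r ⊢
    linear_combination Complex.I * r
  have c1 : (2 * e - 1) * (airyH γ 0 * airyH (γ + 2) 0)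
      = Real.Gamma (1 + γ) * airyH (-1 - γ + 1) 0 * (e * u⁻¹ - (1 - e) * u) := by
    have h := hsin 1
    have r := congrArg (fun r : ℝ => (r : ℂ)) r1
    rw [pow_one, pow_one, hei] at h
    rw [← h, ← h3I, a0, a2, b1]
    simp only [Complex.ofReal_mul, Complex.ofReal_div, Complex.ofReal_ofNat] at r ⊢
    linear_combination Complex.I * r
  have c2 : (2 * e - 1) * (airyH (γ + 1) 0 * airyH (γ + 2) 0)
      = Real.Gamma (1 + γ) * airyH (-1 - γ + 2) 0 * (e ^ 2 * u⁻¹ - (1 - e) ^ 2 * u) := by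
    have h := hsin 2
    have r := congrArg (fun r : ℝ => (r : ℂ)) r2
    rw [hei] at h
    rw [← h, ← h3I, a1, a2, b2]
    simp only [Complex.ofReal_mul, Complex.ofReal_div, Complex.ofReal_ofNat] at r ⊢
    linear_combination Complex.I * r
  clear r0 r1 r2 hsin htri a0 a1 a2 b0 b1 b2 n0 n1 n2
  set C : ℂ := (Real.Gamma (1 + γ) : ℂ)
  have d : ∀ (μ ν : ℝ), -1 < μ → ν = μ + 1 → ∀ z, HasDerivAt (airyH μ) (airyH ν z) z := by
    intro μ ν hμ hν z
    subst hν
    exact hasDerivAt_airyH hμ z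
  have g0 := d γ (γ + 1) hγ₁ rfl
  have g1 := d (γ + 1) (γ + 2) (by linarith) (by ring)
  have g2 := d (γ + 2) (γ + 3) (by linarith) (by ring)
  have k0 := d (-1 - γ) (-1 - γ + 1) (by linarith) rfl
  have k1 := d (-1 - γ + 1) (-1 - γ + 2) (by linarith) (by ring)
  have k2 := d (-1 - γ + 2) (-1 - γ + 3) (by linarith) (by ring)
  have f0 := fun z => hasDerivAt_airyH_mul (μ := γ) (ν := γ + 1) hγ₁ rfl (e ^ 2) z
  have f1 := fun z => hasDerivAt_airyH_mul (μ := γ + 1) (ν := γ + 2)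
    (by linarith) (by ring) (e ^ 2) z
  have f2 := fun z => hasDerivAt_airyH_mul (μ := γ + 2) (ν := γ + 3)
    (by linarith) (by ring) (e ^ 2) z
  have j0 := fun z => hasDerivAt_airyH_mul (μ := -1 - γ) (ν := -1 - γ + 1)
    (by linarith) rfl (e ^ 2) z
  have j1 := fun z => hasDerivAt_airyH_mul (μ := -1 - γ + 1) (ν := -1 - γ + 2)
    (by linarith) (by ring) (e ^ 2) z
  have j2 := fun z => hasDerivAt_airyH_mul (μ := -1 - γ + 2) (ν := -1 - γ + 3)
    (by linarith) (by ring) (e ^ 2) z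
  have hω : (e ^ 2) ^ 3 = 1 := by linear_combination (e ^ 3 - 1) * he3
  set w := e ^ 2 with hw
  -- the second derivative `f₂` is written without `H_{γ+3}`, using the three-term recurrence
  have key := entire_eq_zero_of_ode (c := -(γ : ℂ))
    (f := fun z => airyH γ (w * z) * airyH (γ + 1) z - w * airyH (γ + 1) (w * z) * airyH γ z
      - C * (e * u * airyH (-1 - γ) z - e * u⁻¹ * airyH (-1 - γ) (w * z)))
    (f₁ := fun z => airyH γ (w * z) * airyH (γ + 2) z
      - w ^ 2 * airyH (γ + 2) (w * z) * airyH γ z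
      - C * (e * u * airyH (-1 - γ + 1) z - e * u⁻¹ * (w * airyH (-1 - γ + 1) (w * z))))
    (f₂ := fun z => w * airyH (γ + 1) (w * z) * airyH (γ + 2) z
      - w ^ 2 * airyH (γ + 2) (w * z) * airyH (γ + 1) z
      + z * (airyH γ (w * z) * airyH (γ + 1) z - w * airyH (γ + 1) (w * z) * airyH γ z)
      - C * (e * u * airyH (-1 - γ + 2) z
          - e * u⁻¹ * (w * (w * airyH (-1 - γ + 2) (w * z))))) ?_ ?_ ?_ ?_ ?_ ?_ z
  · exact sub_eq_zero.mp key
  · intro z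
    refine (((f0 z).mul (g1 z)).sub (((f1 z).const_mul w).mul (g0 z)) |>.sub
      ((((k0 z).const_mul (e * u)).sub ((j0 z).const_mul (e * u⁻¹))).const_mul C)).congr_deriv ?_
    ring
  · intro z
    refine (((f0 z).mul (g2 z)).sub (((f2 z).const_mul (w ^ 2)).mul (g0 z)) |>.sub
      ((((k1 z).const_mul (e * u)).sub
        (((j1 z).const_mul w).const_mul (e * u⁻¹))).const_mul C)).congr_deriv ?_
    rw [airyH_add_three hγ₁ z, airyH_add_three hγ₁ (w * z)]
    linear_combination (-(airyH γ z * (w * z * airyH (γ + 1) (w * z)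
      + (γ + 1) * airyH γ (w * z)))) * hω
  · intro z
    have T1 := ((f1 z).const_mul w).mul (g2 z)
    have T2 := ((f2 z).const_mul (w ^ 2)).mul (g1 z)
    have T3 := (hasDerivAt_id z).mul
      (((f0 z).mul (g1 z)).sub (((f1 z).const_mul w).mul (g0 z)))
    have T4 := (((k2 z).const_mul (e * u)).sub
      ((((j2 z).const_mul w).const_mul w).const_mul (e * u⁻¹))).const_mul C
    refine (((T1.sub T2).add T3).sub T4).congr_deriv ?_
    rw [airyH_add_three hγ₁ z, airyH_add_three hγ₁ (w * z),
      airyH_add_three (by linarith) z, airyH_add_three (by linarith) (w * z)]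
    simp only [id, Pi.mul_apply, Pi.sub_apply]
    push_cast
    linear_combination (-(airyH (γ + 1) z * (w * z * airyH (γ + 1) (w * z)
      + (γ + 1) * airyH γ (w * z))) + C * e * u⁻¹ * (w * z * airyH (-1 - γ + 1) (w * z)
      - γ * airyH (-1 - γ) (w * z))) * hω
  · simp only [mul_zero]
    rw [hw]
    linear_combination (-e) * c0 + (airyH γ 0 * airyH (γ + 1) 0) * hee
  · simp only [mul_zero]
    rw [hw]
    linear_combination (-e ^ 2) * c1 + (airyH γ 0 * airyH (γ + 2) 0 * (1 - e ^ 2 + e)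
      - C * u * airyH (-1 - γ + 1) 0 * e) * hq
  · simp only [mul_zero, zero_mul, add_zero]
    rw [hw]
    linear_combination (-e ^ 3) * c2 + (airyH (γ + 1) 0 * airyH (γ + 2) 0 * e ^ 2
      + C * u * airyH (-1 - γ + 2) 0 * (e * (e ^ 2 - e - 1))) * hq

/-! ### Contour rotation -/

/-- In the logarithmic variable `w = log σ`, the form `σ^μ exp(i(σ³/3 + xσ)) dσ` becomes
`airyLog μ x w dw`, whose coefficient is entire. Circular arcs become vertical segments. -/
noncomputable def airyLog (μ x : ℝ) (w : ℂ) : ℂ :=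
  Complex.exp ((μ + 1) * w + Complex.I * (Complex.exp w ^ 3 / 3 + x * Complex.exp w))

lemma norm_airyLog_le {μ x R θ : ℝ} (hR : 0 < R) (h0 : 0 ≤ θ) (h1 : θ ≤ π / 6) :
    ‖airyLog μ x (Real.log R + θ * Complex.I)‖
      ≤ R ^ (μ + 1) * Real.exp (-(R ^ 3 / 3 - |x| * R) * θ) := by
  have hexp : Complex.exp (Real.log R + θ * Complex.I)
      = R * (Complex.exp (θ * Complex.I)) := by
    rw [Complex.exp_add, ← Complex.ofReal_exp, Real.exp_log hR]
  have hexp3 : Complex.exp (Real.log R + θ * Complex.I) ^ 3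
      = ((R ^ 3 : ℝ) : ℂ) * Complex.exp ((3 * θ : ℝ) * Complex.I) := by
    rw [hexp, mul_pow, ← Complex.exp_nat_mul]
    push_cast
    ring_nf
  rw [airyLog, Complex.norm_exp, hexp3, hexp, Real.rpow_def_of_pos hR, ← Real.exp_add]
  have e : (((μ : ℂ) + 1) * (Real.log R + θ * Complex.I)
      + Complex.I * (((R ^ 3 : ℝ) : ℂ) * Complex.exp ((3 * θ : ℝ) * Complex.I) / 3
        + x * (R * Complex.exp (θ * Complex.I)))).re
      = Real.log R * (μ + 1) - (R ^ 3 / 3 * Real.sin (3 * θ) + x * R * Real.sin θ) := by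
    have e' : (((μ : ℂ) + 1) * (Real.log R + θ * Complex.I)
      + Complex.I * (((R ^ 3 : ℝ) : ℂ) * Complex.exp ((3 * θ : ℝ) * Complex.I) / 3
        + x * (R * Complex.exp (θ * Complex.I))))
      = ((Real.log R * (μ + 1) - (R ^ 3 / 3 * Real.sin (3 * θ) + x * R * Real.sin θ) : ℝ) : ℂ)
        + (((μ + 1) * θ + (R ^ 3 / 3 * Real.cos (3 * θ) + x * R * Real.cos θ) : ℝ) : ℂ)
          * Complex.I := by
      rw [Complex.exp_mul_I, Complex.exp_mul_I]
      push_cast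
      linear_combination ((R : ℂ) ^ 3 / 3 * Complex.sin (3 * θ)
        + x * R * Complex.sin θ) * Complex.I_sq
    rw [e']
    simp [-Complex.ofReal_mul, -Complex.ofReal_add, -Complex.ofReal_sub]
  rw [e]
  apply Real.exp_le_exp.2
  have hs1 : θ ≤ Real.sin (3 * θ) := by
    have h := Real.mul_le_sin (x := 3 * θ) (by positivity) (by linarith)
    refine le_trans ?_ h
    have h2 : 1 / 3 ≤ 2 / π := by
      rw [div_le_div_iff₀ (by norm_num) Real.pi_pos]
      linarith [Real.pi_lt_four]
    nlinarith
  have hs2 : |Real.sin θ| ≤ θ := by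
    have := Real.abs_sin_le_abs (x := θ)
    rwa [abs_of_nonneg h0] at this
  have hs3 : -(x * R * Real.sin θ) ≤ |x| * R * θ := by
    calc -(x * R * Real.sin θ) ≤ |x * R * Real.sin θ| := neg_le_abs _
      _ = |x| * R * |Real.sin θ| := by rw [abs_mul, abs_mul, abs_of_pos hR]
      _ ≤ |x| * R * θ := by gcongr
  have hs4 : R ^ 3 / 3 * θ ≤ R ^ 3 / 3 * Real.sin (3 * θ) := by gcongr
  linarith

/-- The integral of `i⁻¹ σ^μ exp(i(σ³/3 + xσ)) dσ` over the arc of radius `R` from angle `0` to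
angle `π/6`. -/
noncomputable def airyArc (μ x R : ℝ) : ℂ :=
  ∫ θ in (0 : ℝ)..(π / 6), airyLog μ x (Real.log R + θ * Complex.I)

lemma airyArc_tendsto_zero {μ : ℝ} (hμ : -1 < μ) (x : ℝ) :
    Tendsto (airyArc μ x) (nhdsWithin 0 (Set.Ioi 0)) (nhds 0) := by
  have hb : ∀ᶠ R in nhdsWithin (0 : ℝ) (Set.Ioi 0),
      ‖airyArc μ x R‖ ≤ R ^ (μ + 1) * Real.exp |x| * |π / 6 - 0| := by
    filter_upwards [Ioo_mem_nhdsGT (show (0 : ℝ) < 1 by norm_num)] with R hR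
    refine intervalIntegral.norm_integral_le_of_norm_le_const fun θ hθ => ?_
    have hpi := Real.pi_pos
    rw [Set.uIoc_of_le (by positivity)] at hθ
    refine (norm_airyLog_le hR.1 hθ.1.le hθ.2).trans ?_
    have hR0 := hR.1
    have : (0 : ℝ) ≤ R ^ (μ + 1) := Real.rpow_nonneg hR0.le _
    refine mul_le_mul_of_nonneg_left (Real.exp_le_exp.2 ?_) this
    have hθ1 : θ ≤ 1 := by linarith [hθ.2, Real.pi_lt_four]
    have h1 : |x| * R * θ ≤ |x| * 1 * 1 := by
      gcongr
      · exact hθ.1.le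
      · exact hR.2.le
    have h2 : 0 ≤ R ^ 3 / 3 * θ := by have := hθ.1; positivity
    linarith
  refine squeeze_zero_norm' hb ?_
  have hc : Tendsto (fun R : ℝ => R ^ (μ + 1)) (nhdsWithin 0 (Set.Ioi 0)) (nhds 0) := by
    have := (Real.continuousAt_rpow_const 0 (μ + 1) (Or.inr (by linarith))).tendsto
    rw [Real.zero_rpow (by linarith)] at this
    exact this.mono_left nhdsWithin_le_nhds
  simpa using (hc.mul_const (Real.exp |x|)).mul_const |π / 6 - 0|

/-- Jordan's lemma for the arcs. -/
lemma airyArc_tendsto_atTop {μ : ℝ} (hμ : μ < 2) (x : ℝ) :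
    Tendsto (airyArc μ x) atTop (nhds 0) := by
  have hb : ∀ᶠ R in atTop, ‖airyArc μ x R‖ ≤ 6 * R ^ (-(2 - μ)) := by
    filter_upwards [eventually_gt_atTop (0 : ℝ), eventually_ge_atTop (6 * |x| + 1)] with R hR hRx
    set K := R ^ 3 / 3 - |x| * R with hK
    have hK6 : R ^ 3 / 6 ≤ K := by
      have h1 : 1 ≤ R := by linarith [abs_nonneg x]
      have h2 : 6 * |x| ≤ R ^ 2 := by nlinarith
      have h3 : 6 * |x| * R ≤ R ^ 2 * R := by gcongr
      rw [hK]
      nlinarith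
    have hK0 : 0 < K := lt_of_lt_of_le (by positivity) hK6
    have hrp : 0 < R ^ (μ + 1) := Real.rpow_pos_of_pos hR _
    have hI : ∫ θ in (0 : ℝ)..(π / 6), R ^ (μ + 1) * Real.exp (-K * θ)
        = R ^ (μ + 1) * ((1 - Real.exp (-K * (π / 6))) / K) := by
      rw [intervalIntegral.integral_const_mul]
      congr 1
      rw [intervalIntegral.integral_eq_sub_of_hasDerivAt
        (f := fun θ => -(Real.exp (-K * θ) / K))]
      · simp
        field_simp
        ring
      · intro θ _
        have := ((hasDerivAt_const_mul (x := θ) (-K)).exp.div_const K).neg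
        refine this.congr_deriv ?_
        field_simp
      · exact Continuous.intervalIntegrable (by fun_prop) _ _
    have hn : ‖airyArc μ x R‖ ≤ ∫ θ in (0 : ℝ)..(π / 6), R ^ (μ + 1) * Real.exp (-K * θ) := by
      refine intervalIntegral.norm_integral_le_of_norm_le (by positivity) ?_ ?_
      · exact Eventually.of_forall fun θ hθ => norm_airyLog_le hR hθ.1.le hθ.2
      · exact Continuous.intervalIntegrable (by fun_prop) _ _
    refine hn.trans ?_
    rw [hI]
    have e : R ^ (μ + 1) = R ^ (-(2 - μ)) * R ^ 3 := by
      rw [← Real.rpow_natCast R 3, ← Real.rpow_add hR]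
      congr 1
      push_cast
      ring
    have h1 : (1 - Real.exp (-K * (π / 6))) / K ≤ 6 / R ^ 3 := by
      calc (1 - Real.exp (-K * (π / 6))) / K ≤ 1 / K := by
            gcongr
            linarith [Real.exp_pos (-K * (π / 6))]
        _ ≤ 1 / (R ^ 3 / 6) := by gcongr
        _ = 6 / R ^ 3 := by field_simp
    calc R ^ (μ + 1) * ((1 - Real.exp (-K * (π / 6))) / K) ≤ R ^ (μ + 1) * (6 / R ^ 3) := by gcongr
      _ = 6 * R ^ (-(2 - μ)) := by rw [e]; field_simp
  refine squeeze_zero_norm' hb ?_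
  simpa using (tendsto_rpow_neg_atTop (show 0 < 2 - μ by linarith)).const_mul 6

lemma intervalIntegrable_rpow_mul {μ : ℝ} (hμ : -1 < μ) {h : ℝ → ℂ} (hh : Continuous h)
    (a b : ℝ) : IntervalIntegrable (fun σ : ℝ => ((σ ^ μ : ℝ) : ℂ) * h σ) volume a b := by
  refine IntervalIntegrable.mul_continuousOn ?_ hh.continuousOn
  have := intervalIntegral.intervalIntegrable_rpow' (a := a) (b := b) hμ
  exact ⟨this.1.ofReal, this.2.ofReal⟩

lemma integral_log_substitution (μ : ℝ) {h : ℝ → ℂ} (hh : Continuous h) {a b : ℝ}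
    (ha : 0 < a) (hb : 0 < b) :
    ∫ t in (Real.log a)..(Real.log b), Complex.exp ((μ + 1) * t) * h (Real.exp t)
      = ∫ σ in a..b, ((σ ^ μ : ℝ) : ℂ) * h σ := by
  have := intervalIntegral.integral_deriv_smul_comp' (a := Real.log a) (b := Real.log b)
    (f := Real.exp) (f' := Real.exp) (g := fun σ : ℝ => ((σ ^ μ : ℝ) : ℂ) * h σ)
    (fun t _ => Real.hasDerivAt_exp t) Real.continuous_exp.continuousOn ?_
  · rw [Real.exp_log ha, Real.exp_log hb] at this
    rw [← this]
    congr 1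
    ext t
    simp only [Function.comp_apply, Complex.real_smul]
    rw [← mul_assoc]
    congr 1
    rw [← Real.exp_mul, ← Complex.ofReal_mul, ← Real.exp_add, Complex.ofReal_exp]
    push_cast
    ring_nf
  · rintro _ ⟨t, _, rfl⟩
    refine (ContinuousAt.mul ?_ hh.continuousAt).continuousWithinAt
    exact Complex.continuous_ofReal.continuousAt.comp
      (Real.continuousAt_rpow_const _ _ (Or.inl (Real.exp_pos t).ne'))

/-- Rotating the oscillatory integral onto the ray of angle `π/6` turns it into the absolutely
convergent integral for `H_μ(ωx)`, `ω = exp(2πi/3)`. -/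
lemma tendsto_oscillatory {μ : ℝ} (hμ₁ : -1 < μ) (hμ₂ : μ < 2) (x : ℝ) :
    Tendsto (fun R : ℝ => ∫ σ in (0 : ℝ)..R,
        ((σ ^ μ : ℝ) : ℂ) * Complex.exp (Complex.I * ((σ : ℂ) ^ 3 / 3 + x * σ))) atTop
      (nhds (Complex.exp (π * (μ + 1) / 6 * Complex.I)
        * airyH μ (Complex.exp (π / 3 * Complex.I) ^ 2 * x))) := by
  set ω := Complex.exp (π / 3 * Complex.I) ^ 2 with hω
  set c := Complex.exp (π * (μ + 1) / 6 * Complex.I) with hc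
  set h₁ : ℝ → ℂ := fun σ => Complex.exp (Complex.I * ((σ : ℂ) ^ 3 / 3 + x * σ)) with hh₁
  set h₂ : ℝ → ℂ := fun r => Complex.exp (-(r : ℂ) ^ 3 / 3 + r * (ω * x)) with hh₂
  have ch₁ : Continuous h₁ := by rw [hh₁]; fun_prop
  have ch₂ : Continuous h₂ := by rw [hh₂]; fun_prop
  have ii₁ := intervalIntegrable_rpow_mul hμ₁ ch₁
  have ii₂ := intervalIntegrable_rpow_mul hμ₁ ch₂
  set D : ℝ → ℂ := fun R => (∫ σ in (0 : ℝ)..R, ((σ ^ μ : ℝ) : ℂ) * h₁ σ)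
    - c * ∫ σ in (0 : ℝ)..R, ((σ ^ μ : ℝ) : ℂ) * h₂ σ with hD
  have hrect : ∀ a b : ℝ, 0 < a → 0 < b →
      D b + Complex.I * airyArc μ x b = D a + Complex.I * airyArc μ x a := by
    intro a b ha hb
    have hdiff : Differentiable ℂ (airyLog μ x) := by
      unfold airyLog
      fun_prop
    have h := Complex.integral_boundary_rect_eq_zero_of_differentiableOn (airyLog μ x)
      (Real.log a : ℂ) (Real.log b + (π / 6 : ℝ) * Complex.I) hdiff.differentiableOn
    have re1 : ((Real.log b : ℂ) + ((π / 6 : ℝ) : ℂ) * Complex.I).re = Real.log b := by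
      simp [-Complex.ofReal_div]
    have im1 : ((Real.log b : ℂ) + ((π / 6 : ℝ) : ℂ) * Complex.I).im = π / 6 := by
      simp [-Complex.ofReal_div]
    rw [re1, im1, Complex.ofReal_re, Complex.ofReal_im] at h
    have bot : ∫ t in (Real.log a)..(Real.log b), airyLog μ x (t + ((0 : ℝ) : ℂ) * Complex.I)
        = ∫ σ in a..b, ((σ ^ μ : ℝ) : ℂ) * h₁ σ := by
      rw [← integral_log_substitution μ ch₁ ha hb]
      congr 1
      ext t
      simp only [airyLog, hh₁, Complex.ofReal_zero, zero_mul, add_zero, Complex.ofReal_exp]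
      rw [← Complex.exp_add]
    have top : ∫ t in (Real.log a)..(Real.log b),
          airyLog μ x (t + ((π / 6 : ℝ) : ℂ) * Complex.I)
        = c * ∫ σ in a..b, ((σ ^ μ : ℝ) : ℂ) * h₂ σ := by
      rw [← integral_log_substitution μ ch₂ ha hb, ← intervalIntegral.integral_const_mul]
      congr 1
      ext t
      -- `i * exp(iπ/6)³ = -1` and `i * exp(iπ/6) = ω`
      have hk : Complex.exp (t + ((π / 6 : ℝ) : ℂ) * Complex.I)
          = Complex.exp t * Complex.exp (((π / 6 : ℝ) : ℂ) * Complex.I) := Complex.exp_add _ _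
      have hk3 : Complex.exp (((π / 6 : ℝ) : ℂ) * Complex.I) ^ 3 = Complex.I := by
        rw [← Complex.exp_nat_mul]
        refine (congrArg Complex.exp ?_).trans Complex.exp_pi_div_two_mul_I
        push_cast
        ring
      have hkω : Complex.I * Complex.exp (((π / 6 : ℝ) : ℂ) * Complex.I) = ω := by
        have h2 : Complex.exp (π / 2 * Complex.I) * Complex.exp (((π / 6 : ℝ) : ℂ) * Complex.I)
            = ω := by
          rw [hω, ← Complex.exp_nat_mul, ← Complex.exp_add]
          congr 1
          push_cast
          ring
        rwa [Complex.exp_pi_div_two_mul_I] at h2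
      simp only [airyLog, hh₂, hc, Complex.ofReal_exp]
      rw [← Complex.exp_add, ← Complex.exp_add, hk, mul_pow, hk3, ← hkω]
      congr 1
      push_cast
      linear_combination (Complex.exp t ^ 3 / 3) * Complex.I_sq
    rw [bot, top] at h
    have s1 := intervalIntegral.integral_interval_sub_left (ii₁ 0 b) (ii₁ 0 a)
    have s2 := intervalIntegral.integral_interval_sub_left (ii₂ 0 b) (ii₂ 0 a)
    simp only [smul_eq_mul] at h
    simp only [hD, airyArc]
    linear_combination h + s1 - c * s2
  have hD0 : Tendsto D (nhdsWithin 0 (Set.Ioi 0)) (nhds 0) := by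
    have hcont : Continuous D :=
      (intervalIntegral.continuous_primitive ii₁ 0).sub
        ((intervalIntegral.continuous_primitive ii₂ 0).const_mul c)
    have h0 : D 0 = 0 := by simp [hD]
    have := hcont.tendsto 0
    rw [h0] at this
    exact this.mono_left nhdsWithin_le_nhds
  have hDb : ∀ b : ℝ, 0 < b → D b = -(Complex.I * airyArc μ x b) := by
    intro b hb
    have ht : Tendsto (fun a => D a + Complex.I * airyArc μ x a) (nhdsWithin 0 (Set.Ioi 0))
        (nhds (0 + Complex.I * 0)) := hD0.add ((airyArc_tendsto_zero hμ₁ x).const_mul _)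
    have ht' : Tendsto (fun a => D a + Complex.I * airyArc μ x a) (nhdsWithin 0 (Set.Ioi 0))
        (nhds (D b + Complex.I * airyArc μ x b)) := by
      refine tendsto_const_nhds.congr' ?_
      filter_upwards [self_mem_nhdsWithin] with a ha
      exact hrect a b ha hb
    have := tendsto_nhds_unique ht' ht
    linear_combination this
  have hH : Tendsto (fun R : ℝ => c * ∫ σ in (0 : ℝ)..R, ((σ ^ μ : ℝ) : ℂ) * h₂ σ) atTop
      (nhds (c * airyH μ (ω * x))) :=
    (intervalIntegral_tendsto_integral_Ioi 0 (integrableOn_airyH hμ₁ (ω * x))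
      tendsto_id).const_mul c
  have hA := ((airyArc_tendsto_atTop hμ₂ x).const_mul Complex.I).neg
  rw [mul_zero, neg_zero] at hA
  have := hH.add hA
  rw [add_zero] at this
  refine this.congr' ?_
  filter_upwards [eventually_gt_atTop (0 : ℝ)] with b hb
  rw [← hDb b hb]
  simp only [hD]
  ring

/-- `Ai_μ(x) + i Gi_μ(x)` in terms of `H_μ(ωx)`. -/
lemma airy_add_scorer {μ x A G : ℝ} (hμ₁ : -1 < μ) (hμ₂ : μ < 2)
    (hA : Tendsto (fun R : ℝ =>
          (1 / π) * ∫ σ in (0 : ℝ)..R, σ ^ μ * Real.cos (σ ^ 3 / 3 + x * σ - μ * π / 2))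
        atTop (nhds A))
    (hG : Tendsto (fun R : ℝ =>
          (1 / π) * ∫ σ in (0 : ℝ)..R, σ ^ μ * Real.sin (σ ^ 3 / 3 + x * σ - μ * π / 2))
        atTop (nhds G)) :
    (A : ℂ) + G * Complex.I = 1 / π * Complex.exp ((π / 6 - π * μ / 3) * Complex.I)
      * airyH μ (Complex.exp (π / 3 * Complex.I) ^ 2 * x) := by
  have h1 : Tendsto (fun R : ℝ =>
      (((1 / π) * ∫ σ in (0 : ℝ)..R, σ ^ μ * Real.cos (σ ^ 3 / 3 + x * σ - μ * π / 2) : ℝ) : ℂ)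
      + (((1 / π) * ∫ σ in (0 : ℝ)..R,
          σ ^ μ * Real.sin (σ ^ 3 / 3 + x * σ - μ * π / 2) : ℝ) : ℂ) * Complex.I) atTop
      (nhds ((A : ℂ) + G * Complex.I)) :=
    ((Complex.continuous_ofReal.tendsto A).comp hA).add
      (((Complex.continuous_ofReal.tendsto G).comp hG).mul_const _)
  have h2 := (tendsto_oscillatory hμ₁ hμ₂ x).const_mul
    (1 / (π : ℂ) * Complex.exp (-(μ * π / 2) * Complex.I))
  have e : Complex.exp ((π / 6 - π * μ / 3) * Complex.I)
      = Complex.exp (-(μ * π / 2) * Complex.I) * Complex.exp (π * (μ + 1) / 6 * Complex.I) := by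
    rw [← Complex.exp_add]
    congr 1
    ring
  rw [e]
  refine (tendsto_nhds_unique h1 (h2.congr fun R => ?_)).trans (by ring)
  have i1 := intervalIntegrable_rpow_mul hμ₁ (h := fun σ : ℝ =>
    ((Real.cos (σ ^ 3 / 3 + x * σ - μ * π / 2) : ℝ) : ℂ)) (by fun_prop) 0 R
  have i2 := (intervalIntegrable_rpow_mul hμ₁ (h := fun σ : ℝ =>
    ((Real.sin (σ ^ 3 / 3 + x * σ - μ * π / 2) : ℝ) : ℂ)) (by fun_prop) 0 R).mul_const Complex.I
  rw [Complex.ofReal_mul, Complex.ofReal_mul, ← intervalIntegral.integral_ofReal,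
    ← intervalIntegral.integral_ofReal, mul_assoc _ _ Complex.I, ← mul_add,
    ← intervalIntegral.integral_mul_const]
  simp only [Complex.ofReal_mul]
  rw [← intervalIntegral.integral_add i1 i2, mul_assoc, ← intervalIntegral.integral_const_mul]
  push_cast
  congr 1
  congr 1
  ext σ
  have hx : Complex.exp (-(μ * π / 2) * Complex.I)
        * Complex.exp (Complex.I * ((σ : ℂ) ^ 3 / 3 + x * σ))
      = Complex.exp (((σ : ℂ) ^ 3 / 3 + x * σ - μ * π / 2) * Complex.I) := by
    rw [← Complex.exp_add]
    congr 1
    ring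
  rw [Complex.exp_mul_I ((σ : ℂ) ^ 3 / 3 + x * σ - μ * π / 2)] at hx
  linear_combination ((σ ^ μ : ℝ) : ℂ) * hx

/-! ### The Wronskian identities -/

/-- Wronskian-type identities between the generalized Airy function `Ai_γ`,
defined by `Ai_γ(x) = (1/π)·lim_{R→∞} ∫_0^R σ^γ cos(σ³/3 + xσ - γπ/2) dσ`,
the generalized Scorer function `Gi_γ`, defined by
`Gi_γ(x) = (1/π)·lim_{R→∞} ∫_0^R σ^γ sin(σ³/3 + xσ - γπ/2) dσ`,
and `Hi_γ`. -/
theorem wronskian_identities (γ : ℝ) (hγ₁ : -1 < γ) (hγ₂ : γ < 0)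
    (Ai Gi : ℝ → ℝ → ℝ)
    (hAi : ∀ μ : ℝ, -1 < μ → μ < 2 → ∀ x : ℝ,
      Tendsto (fun R : ℝ =>
          (1 / π) * ∫ σ in (0 : ℝ)..R, σ ^ μ * Real.cos (σ ^ 3 / 3 + x * σ - μ * π / 2))
        atTop (nhds (Ai μ x)))
    (hGi : ∀ μ : ℝ, -1 < μ → μ < 2 → ∀ x : ℝ,
      Tendsto (fun R : ℝ =>
          (1 / π) * ∫ σ in (0 : ℝ)..R, σ ^ μ * Real.sin (σ ^ 3 / 3 + x * σ - μ * π / 2))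
        atTop (nhds (Gi μ x))) :
    ∀ x : ℝ,
      (Ai (γ + 1) x * Gi γ x - Ai γ x * Gi (γ + 1) x
          = (Real.Gamma (1 + γ) / π) * Ai (-1 - γ) x) ∧
      (Ai γ x * scorerHi (γ + 1) x + Ai (γ + 1) x * scorerHi γ x
          = (Real.Gamma (1 + γ) / π)
            * (-Real.cos (π * γ) * Ai (-1 - γ) x - Real.sin (π * γ) * Gi (-1 - γ) x)) ∧
      (Gi γ x * scorerHi (γ + 1) x + Gi (γ + 1) x * scorerHi γ x
          = (Real.Gamma (1 + γ) / π)
            * (Real.sin (π * γ) * Ai (-1 - γ) x - Real.cos (π * γ) * Gi (-1 - γ) x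
                + scorerHi (-1 - γ) x)) := by
  intro x
  set e : ℂ := Complex.exp (π / 3 * Complex.I) with he
  set u : ℂ := Complex.exp (π * γ / 3 * Complex.I) with hu
  set k : ℂ := Complex.exp (π / 6 * Complex.I) with hk
  have he0 : e ≠ 0 := Complex.exp_ne_zero _
  have hu0 : u ≠ 0 := Complex.exp_ne_zero _
  have hk0 : k ≠ 0 := Complex.exp_ne_zero _
  have hpi : (π : ℂ) ≠ 0 := Complex.ofReal_ne_zero.2 Real.pi_ne_zero
  have hke : k * e = Complex.I := by
    refine Eq.trans ?_ Complex.exp_pi_div_two_mul_I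
    rw [hk, he, ← Complex.exp_add]
    congr 1
    ring
  have he3 : e ^ 3 = -1 := by
    rw [he, ← Complex.exp_nat_mul, ← Complex.exp_pi_mul_I]
    congr 1
    push_cast
    ring
  have z0 := airy_add_scorer hγ₁ (by linarith) (hAi γ hγ₁ (by linarith) x)
    (hGi γ hγ₁ (by linarith) x)
  have z1 := airy_add_scorer (by linarith) (by linarith)
    (hAi (γ + 1) (by linarith) (by linarith) x) (hGi (γ + 1) (by linarith) (by linarith) x)
  have zb := airy_add_scorer (by linarith) (by linarith)
    (hAi (-1 - γ) (by linarith) (by linarith) x) (hGi (-1 - γ) (by linarith) (by linarith) x)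
  have x0 : Complex.exp ((π / 6 - π * γ / 3) * Complex.I) = k * u⁻¹ := by
    rw [hk, hu, ← Complex.exp_neg, ← Complex.exp_add]
    congr 1
    ring
  have x1 : Complex.exp ((π / 6 - π * ((γ + 1 : ℝ) : ℂ) / 3) * Complex.I)
      = k * u⁻¹ * e⁻¹ := by
    rw [hk, hu, he, ← Complex.exp_neg, ← Complex.exp_neg, ← Complex.exp_add, ← Complex.exp_add]
    congr 1
    push_cast
    ring
  have xb : Complex.exp ((π / 6 - π * ((-1 - γ : ℝ) : ℂ) / 3) * Complex.I) = k * e * u := by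
    rw [hk, hu, he, ← Complex.exp_add, ← Complex.exp_add]
    congr 1
    push_cast
    ring
  rw [x0] at z0
  rw [x1] at z1
  rw [xb, hke] at zb
  rw [← he] at z0 z1 zb
  have hei : e⁻¹ = -e ^ 2 := by
    apply inv_eq_of_mul_eq_one_right
    linear_combination -he3
  have ce : starRingEnd ℂ e = e⁻¹ := by
    rw [he, ← Complex.exp_conj, ← Complex.exp_neg]
    simp [Complex.conj_ofNat]
  have cu : starRingEnd ℂ u = u⁻¹ := by
    rw [hu, ← Complex.exp_conj, ← Complex.exp_neg]
    simp [Complex.conj_ofNat]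
  have ck : starRingEnd ℂ k = k⁻¹ := by
    rw [hk, ← Complex.exp_conj, ← Complex.exp_neg]
    simp [Complex.conj_ofNat]
  have w1 := airyH_wronskian hγ₁ hγ₂ he hu (x : ℂ)
  have w2 := airyH_wronskian hγ₁ hγ₂ he hu (e ^ 2 * x)
  -- `ω² = conj ω`, so the values at `ω²x` are conjugate to those at `ωx`
  have hcx : e ^ 2 * (e ^ 2 * (x : ℂ)) = starRingEnd ℂ (e ^ 2 * x) := by
    rw [map_mul, map_pow, ce, hei, Complex.conj_ofReal]
    ring
  rw [hcx, airyH_conj, airyH_conj, airyH_conj] at w2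
  have c0 := congrArg (starRingEnd ℂ) z0
  have c1 := congrArg (starRingEnd ℂ) z1
  have cb := congrArg (starRingEnd ℂ) zb
  simp only [map_add, map_mul, map_div₀, map_one, map_inv₀, Complex.conj_ofReal, Complex.conj_I,
    ce, cu, ck, inv_inv] at c0 c1 cb
  have s0 := scorerHi_eq_airyH γ x
  have s1 := scorerHi_eq_airyH (γ + 1) x
  have sb := scorerHi_eq_airyH (-1 - γ) x
  have hu3 : (Real.cos (π * γ) : ℂ) - Real.sin (π * γ) * Complex.I = u⁻¹ ^ 3 := by
    rw [hu, ← Complex.exp_neg, ← Complex.exp_nat_mul]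
    have : ((3 : ℕ) : ℂ) * -(π * γ / 3 * Complex.I) = (-(π * γ)) * Complex.I := by
      push_cast; ring
    rw [this, Complex.exp_mul_I, Complex.cos_neg, Complex.sin_neg]
    push_cast
    ring
  clear_value e u k
  generalize airyH γ (e ^ 2 * x) = X0 at *
  generalize airyH (γ + 1) (e ^ 2 * x) = X1 at *
  generalize airyH (-1 - γ) (e ^ 2 * x) = Y at *
  generalize airyH γ (x : ℂ) = g0 at *
  generalize airyH (γ + 1) (x : ℂ) = g1 at *
  generalize airyH (-1 - γ) (x : ℂ) = gb at *
  generalize scorerHi γ x = h0 at *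
  generalize scorerHi (γ + 1) x = h1 at *
  generalize scorerHi (-1 - γ) x = hb at *
  generalize Ai γ x = A0 at *
  generalize Ai (γ + 1) x = A1 at *
  generalize Ai (-1 - γ) x = Ab at *
  generalize Gi γ x = G0 at *
  generalize Gi (γ + 1) x = G1 at *
  generalize Gi (-1 - γ) x = Gb at *
  generalize Real.Gamma (1 + γ) = Γg at *
  generalize Real.cos (π * γ) = cg at *
  generalize Real.sin (π * γ) = sg at *
  have main : ((A0 : ℂ) + G0 * Complex.I) * h1 + (A1 + G1 * Complex.I) * h0
      = Γg / π * (-(cg - sg * Complex.I) * (Ab + Gb * Complex.I) + Complex.I * hb) := by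
    rw [hu3, z0, z1, zb, s0, s1, sb, hei, ← hke]
    have : u * u⁻¹ = 1 := mul_inv_cancel₀ hu0
    linear_combination (1 / (π : ℂ) ^ 2 * k * u⁻¹) * w1
      + (Γg * k * e / (π : ℂ) ^ 2 * (gb + u⁻¹ ^ 2 * Y)) * this
  have main2 : ((A0 : ℂ) + G0 * -Complex.I) * (A1 + G1 * Complex.I)
      - (A1 + G1 * -Complex.I) * (A0 + G0 * Complex.I)
      = Γg / π * (-Complex.I) * ((Ab + Gb * Complex.I) + (Ab + Gb * -Complex.I)) := by
    rw [c0, c1, cb, z0, z1, zb]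
    have q1 : u * u⁻¹ = 1 := mul_inv_cancel₀ hu0
    have q2 : e * e⁻¹ = 1 := mul_inv_cancel₀ he0
    have q3 : k * k⁻¹ = 1 := mul_inv_cancel₀ hk0
    have : (1 / (π : ℂ) * (k⁻¹ * u) * (starRingEnd ℂ) X0) * (1 / π * (k * u⁻¹ * e⁻¹) * X1)
        - (1 / (π : ℂ) * (k⁻¹ * u * e) * (starRingEnd ℂ) X1) * (1 / π * (k * u⁻¹) * X0)
        = 1 / (π : ℂ) ^ 2 * e⁻¹ * ((starRingEnd ℂ) X0 * X1 - e ^ 2 * (starRingEnd ℂ) X1 * X0) := by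
      field_simp
    rw [this, w2]
    field_simp
    linear_combination (Γg * u ^ 2 * Y - Γg * (starRingEnd ℂ) Y) * Complex.I_sq
  have re1 := congrArg Complex.re main
  have im1 := congrArg Complex.im main
  have im2 := congrArg Complex.im main2
  rw [← Complex.ofReal_div] at re1 im1 im2
  simp at re1 im1 im2
  refine ⟨?_, ?_, ?_⟩
  · linarith
  · linarith
  · linarith
end
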